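/- arXiv:1111.3159 — 2 statements merged into one kernel-verified Lean document; each statement's English description precedes it below -/
import Mathlib

section
/- Let {c_ij : 1 ≤ i,j ≤ n} be an n×n array of real numbers with n ≥ 2 such that Σ_{j=1}^n c_ij = 0 for every i and Σ_{i=1}^n c_ij = 0 for every j, and suppose (1/(n−1)) Σ_{i,j=1}^n c_ij² = 1. Let π be a uniformly random permutation of {1,…,n} and W = Σ_{i=1}^n c_{iπ(i)}. Then sup_{z∈ℝ} |P(W ≤ z) − Φ(z)| ≤ (451/n) Σ_{i,j=1}^n |c_ij|³. -/
open MeasureTheory ProbabilityTheory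
open scoped ENNReal

/-- The standard normal cumulative distribution function `Φ`. -/
noncomputable def stdNormalCDF (z : ℝ) : ℝ := ((gaussianReal 0 1) (Set.Iic z)).toReal

/-!
Exchanging two images of a uniform permutation gives an exchangeable pair, so Stein's method reduces
the theorem to comparing `f'(W)` with the increments of the solution `f` of Stein's equation for a
smoothed indicator. Conditionally on what the permutation does at the at most four points involved,
`W` differs by a bounded number of entries from the statistic `S` of a smaller array, and the
comparison only requires that `S` charges an interval of length `l` by `O(l + δ)`. As in
Bolthausen's argument, this concentration is the Berry–Esseen bound for the smaller array, whose
row and column means are negligible, so the theorem follows by induction on the size. The constant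
closes up because smoothing at a large multiple of the error scale makes the contribution of `δ`
small.
-/

namespace CombinatorialCLT

open Equiv Finset
open scoped BigOperators

/-! ### Stein's equation for the standard normal law -/

section GaussianTail

variable {b w : ℝ}

theorem integral_Ioi_exp_neg_mul_sq_le (hb : 0 < b) (hw : 0 ≤ w) :
    ∫ t in Set.Ioi w, Real.exp (-b * t ^ 2) ≤ √(Real.pi / b) / 2 * Real.exp (-b * w ^ 2) := by
  have hshift := (measurePreserving_add_right (volume : Measure ℝ) w).setIntegral_preimage_emb
    (MeasurableEquiv.addRight w).measurableEmbedding (fun t : ℝ => Real.exp (-b * t ^ 2))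
    (Set.Ioi w)
  rw [Set.preimage_add_const_Ioi, sub_self] at hshift
  rw [← hshift, ← integral_gaussian_Ioi, ← integral_mul_const]
  refine setIntegral_mono_on ((integrable_exp_neg_mul_sq hb).comp_add_right w).integrableOn
    ((integrable_exp_neg_mul_sq hb).mul_const _).integrableOn measurableSet_Ioi fun x hx => ?_
  rw [← Real.exp_add, Real.exp_le_exp]
  nlinarith [mul_nonneg hb.le (mul_nonneg (le_of_lt hx) hw)]

theorem mul_integral_Ioi_exp_neg_mul_sq_le (hb : 0 < b) (hw : 0 ≤ w) :
    2 * b * w * ∫ t in Set.Ioi w, Real.exp (-b * t ^ 2) ≤ Real.exp (-b * w ^ 2) := by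
  have hderiv : ∀ x ∈ Set.Ioi w, HasDerivAt (fun t : ℝ => -Real.exp (-b * t ^ 2))
      (2 * b * x * Real.exp (-b * x ^ 2)) x := fun x _ =>
    ((hasDerivAt_pow 2 x).const_mul (-b)).exp.neg.congr_deriv (by norm_num; ring)
  have htend : Filter.Tendsto (fun t : ℝ => -Real.exp (-b * t ^ 2)) Filter.atTop (nhds 0) := by
    rw [← neg_zero]
    exact (Real.tendsto_exp_atBot.comp <|
      (Filter.tendsto_pow_atTop two_ne_zero).const_mul_atTop_of_neg (neg_neg_of_pos hb)).neg
  have hcont : ContinuousWithinAt (fun t : ℝ => -Real.exp (-b * t ^ 2)) (Set.Ici w) w := by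
    fun_prop
  have hpos : ∀ x ∈ Set.Ioi w, 0 ≤ 2 * b * x * Real.exp (-b * x ^ 2) := fun x hx => by
    have : 0 ≤ x := hw.trans (le_of_lt hx)
    positivity
  have hint := integral_Ioi_of_hasDerivAt_of_nonneg hcont hderiv hpos htend
  rw [zero_sub, neg_neg] at hint
  rw [← hint, ← integral_const_mul]
  refine setIntegral_mono_on ((integrable_exp_neg_mul_sq hb).const_mul _).integrableOn
    (integrableOn_Ioi_deriv_of_nonneg hcont hderiv hpos htend) measurableSet_Ioi fun x hx => ?_
  have := le_of_lt (Set.mem_Ioi.mp hx)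
  gcongr

theorem abs_integral_Iic_le_integral_Ioi_abs {G g : ℝ → ℝ} (hG : Integrable G)
    (hg : Integrable g) (heven : ∀ t, g (-t) = g t) (hGg : ∀ t, |G t| ≤ g t)
    (hG0 : ∫ t, G t = 0) (w : ℝ) :
    |∫ t in Set.Iic w, G t| ≤ ∫ t in Set.Ioi |w|, g t := by
  have hmono (s : Set ℝ) : |∫ t in s, G t| ≤ ∫ t in s, g t :=
    abs_integral_le_integral_abs.trans (integral_mono hG.abs.integrableOn hg.integrableOn hGg)
  rcases le_total 0 w with hw | hw
  · have hsplit := intervalIntegral.integral_Iic_add_Ioi (b := w) hG.integrableOn hG.integrableOn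
    rw [eq_neg_of_add_eq_zero_left (hsplit.trans hG0), abs_neg, abs_of_nonneg hw]
    exact hmono _
  · have hreflect := integral_comp_neg_Ioi (-w) g
    simp only [neg_neg, heven] at hreflect
    rw [abs_of_nonpos hw, hreflect]
    exact hmono _

end GaussianTail

theorem integral_gaussianReal_zero_one (h : ℝ → ℝ) :
    ∫ x, h x ∂gaussianReal 0 1
      = (√(2 * Real.pi))⁻¹ * ∫ t, h t * Real.exp (-(1 / 2) * t ^ 2) := by
  rw [integral_gaussianReal_eq_integral_smul one_ne_zero, ← integral_const_mul]
  refine integral_congr_ae (ae_of_all _ fun x => ?_)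
  simp only [gaussianPDFReal, NNReal.coe_one, mul_one, sub_zero, smul_eq_mul]
  ring_nf

/-- The bounded solution of Stein's equation `f' w - w * f w = h w - ∫ h dγ`, where `γ` is the
standard normal law. -/
noncomputable def steinSolution (h : ℝ → ℝ) (w : ℝ) : ℝ :=
  Real.exp (w ^ 2 / 2) *
    ∫ t in Set.Iic w, (h t - ∫ x, h x ∂gaussianReal 0 1) * Real.exp (-(1 / 2) * t ^ 2)

section SteinSolution

variable {h : ℝ → ℝ} {C : ℝ}

theorem exp_sq_div_two_mul_exp (w : ℝ) :
    Real.exp (w ^ 2 / 2) * Real.exp (-(1 / 2) * w ^ 2) = 1 := by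
  rw [← Real.exp_add, Real.exp_eq_one_iff]; ring

theorem abs_centered_mul_exp_le (hC : ∀ x, |h x - ∫ x, h x ∂gaussianReal 0 1| ≤ C) (t : ℝ) :
    |(h t - ∫ x, h x ∂gaussianReal 0 1) * Real.exp (-(1 / 2) * t ^ 2)|
      ≤ C * Real.exp (-(1 / 2) * t ^ 2) := by
  rw [abs_mul, Real.abs_exp]
  exact mul_le_mul_of_nonneg_right (hC t) (Real.exp_pos _).le

theorem integrable_centered_mul_exp (hm : Measurable h)
    (hC : ∀ x, |h x - ∫ x, h x ∂gaussianReal 0 1| ≤ C) :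
    Integrable fun t => (h t - ∫ x, h x ∂gaussianReal 0 1) * Real.exp (-(1 / 2) * t ^ 2) :=
  ((integrable_exp_neg_mul_sq one_half_pos).const_mul C).mono' (by fun_prop)
    (ae_of_all _ (abs_centered_mul_exp_le hC))

theorem integral_centered_mul_exp (hm : Measurable h)
    (hC : ∀ x, |h x - ∫ x, h x ∂gaussianReal 0 1| ≤ C) :
    ∫ t, (h t - ∫ x, h x ∂gaussianReal 0 1) * Real.exp (-(1 / 2) * t ^ 2) = 0 := by
  have hint : Integrable (fun x => h x - ∫ x, h x ∂gaussianReal 0 1) (gaussianReal 0 1) :=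
    .of_bound (by fun_prop) C (ae_of_all _ hC)
  have hint' : Integrable h (gaussianReal 0 1) :=
    (hint.add (integrable_const _)).congr (ae_of_all _ fun x => sub_add_cancel _ _)
  have hzero : ∫ x, (h x - ∫ x, h x ∂gaussianReal 0 1) ∂gaussianReal 0 1 = 0 := by
    simp [integral_sub hint' (integrable_const _)]
  rw [integral_gaussianReal_zero_one] at hzero
  exact (mul_eq_zero.mp hzero).resolve_left (by positivity)

theorem abs_steinSolution_le_exp_mul (hm : Measurable h)
    (hC : ∀ x, |h x - ∫ x, h x ∂gaussianReal 0 1| ≤ C) (w : ℝ) :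
    |steinSolution h w|
      ≤ C * (Real.exp (|w| ^ 2 / 2) * ∫ t in Set.Ioi |w|, Real.exp (-(1 / 2) * t ^ 2)) := by
  have htail := abs_integral_Iic_le_integral_Ioi_abs (integrable_centered_mul_exp hm hC)
    ((integrable_exp_neg_mul_sq one_half_pos).const_mul C) (fun t => by rw [neg_sq])
    (abs_centered_mul_exp_le hC) (integral_centered_mul_exp hm hC) w
  rw [integral_const_mul] at htail
  rw [steinSolution, abs_mul, Real.abs_exp, sq_abs, mul_left_comm]
  gcongr

theorem abs_steinSolution_le (hm : Measurable h)
    (hC : ∀ x, |h x - ∫ x, h x ∂gaussianReal 0 1| ≤ C) (w : ℝ) :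
    |steinSolution h w| ≤ C * √(Real.pi / 2) := by
  have hC0 : 0 ≤ C := (abs_nonneg _).trans (hC 0)
  have hsqrt : √(Real.pi / (1 / 2)) / 2 = √(Real.pi / 2) := by
    rw [show Real.pi / (1 / 2) = 2 ^ 2 * (Real.pi / 2) by ring,
      Real.sqrt_mul (by norm_num), Real.sqrt_sq (by norm_num)]
    ring
  refine (abs_steinSolution_le_exp_mul hm hC w).trans (mul_le_mul_of_nonneg_left ?_ hC0)
  calc Real.exp (|w| ^ 2 / 2) * ∫ t in Set.Ioi |w|, Real.exp (-(1 / 2) * t ^ 2)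
      ≤ Real.exp (|w| ^ 2 / 2) * (√(Real.pi / (1 / 2)) / 2 * Real.exp (-(1 / 2) * |w| ^ 2)) := by
        gcongr; exact integral_Ioi_exp_neg_mul_sq_le one_half_pos (abs_nonneg w)
    _ = √(Real.pi / 2) := by
        rw [hsqrt]; linear_combination √(Real.pi / 2) * exp_sq_div_two_mul_exp |w|

theorem abs_mul_steinSolution_le (hm : Measurable h)
    (hC : ∀ x, |h x - ∫ x, h x ∂gaussianReal 0 1| ≤ C) (w : ℝ) :
    |w * steinSolution h w| ≤ C := by
  have hC0 : 0 ≤ C := (abs_nonneg _).trans (hC 0)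
  have htail := mul_integral_Ioi_exp_neg_mul_sq_le one_half_pos (abs_nonneg w)
  calc |w * steinSolution h w|
      ≤ |w| * (C * (Real.exp (|w| ^ 2 / 2) *
          ∫ t in Set.Ioi |w|, Real.exp (-(1 / 2) * t ^ 2))) := by
        rw [abs_mul]; gcongr; exact abs_steinSolution_le_exp_mul hm hC w
    _ = C * (Real.exp (|w| ^ 2 / 2) *
          (2 * (1 / 2) * |w| * ∫ t in Set.Ioi |w|, Real.exp (-(1 / 2) * t ^ 2))) := by ring
    _ ≤ C * (Real.exp (|w| ^ 2 / 2) * Real.exp (-(1 / 2) * |w| ^ 2)) := by gcongr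
    _ = C := by rw [exp_sq_div_two_mul_exp, mul_one]

theorem hasDerivAt_steinSolution (hc : Continuous h)
    (hC : ∀ x, |h x - ∫ x, h x ∂gaussianReal 0 1| ≤ C) (w : ℝ) :
    HasDerivAt (steinSolution h)
      (w * steinSolution h w + (h w - ∫ x, h x ∂gaussianReal 0 1)) w := by
  set G : ℝ → ℝ := fun t => (h t - ∫ x, h x ∂gaussianReal 0 1) * Real.exp (-(1 / 2) * t ^ 2)
  have hGc : Continuous G := by fun_prop
  have hGi : Integrable G := integrable_centered_mul_exp hc.measurable hC
  have hprimitive : HasDerivAt (fun u => ∫ t in Set.Iic u, G t) (G w) w := by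
    refine ((hGc.integral_hasStrictDerivAt 0 w).hasDerivAt.const_add
      (∫ t in Set.Iic (0 : ℝ), G t)).congr_of_eventuallyEq (.of_forall fun u => ?_)
    have := intervalIntegral.integral_Iic_sub_Iic (a := (0 : ℝ)) (b := u)
      hGi.integrableOn hGi.integrableOn
    simp only [← this]
    ring
  have hexp : HasDerivAt (fun u : ℝ => Real.exp (u ^ 2 / 2)) (Real.exp (w ^ 2 / 2) * w) w :=
    (((hasDerivAt_pow 2 w).div_const 2).congr_deriv (by norm_num)).exp
  refine (hexp.mul hprimitive).congr_deriv ?_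
  simp only [G, steinSolution]
  linear_combination (h w - ∫ x, h x ∂gaussianReal 0 1) * exp_sq_div_two_mul_exp w

theorem abs_deriv_steinSolution_le (hc : Continuous h)
    (hC : ∀ x, |h x - ∫ x, h x ∂gaussianReal 0 1| ≤ C) (w : ℝ) :
    |deriv (steinSolution h) w| ≤ 2 * C := by
  rw [(hasDerivAt_steinSolution hc hC w).deriv, two_mul]
  exact (abs_add_le _ _).trans (add_le_add (abs_mul_steinSolution_le hc.measurable hC w) (hC w))

end SteinSolution

/-! ### Smoothing the Kolmogorov distance -/

theorem stdNormalCDF_nonneg (z : ℝ) : 0 ≤ stdNormalCDF z := ENNReal.toReal_nonneg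

theorem stdNormalCDF_le_one (z : ℝ) : stdNormalCDF z ≤ 1 := measureReal_le_one

theorem inv_sqrt_two_mul_pi_le : (√(2 * Real.pi))⁻¹ ≤ 2 / 5 := by
  rw [inv_le_comm₀ (by positivity) (by norm_num)]
  exact Real.le_sqrt_of_sq_le (by nlinarith [Real.pi_gt_d6])

theorem gaussianPDFReal_zero_one_le (x : ℝ) : gaussianPDFReal 0 1 x ≤ 2 / 5 := by
  simp only [gaussianPDFReal, NNReal.coe_one, mul_one, sub_zero]
  have hexp : Real.exp (-x ^ 2 / 2) ≤ 1 := Real.exp_le_one_iff.mpr (by nlinarith [sq_nonneg x])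
  exact (mul_le_of_le_one_right (by positivity) hexp).trans inv_sqrt_two_mul_pi_le

theorem stdNormalCDF_sub_le {a b : ℝ} (hab : a ≤ b) :
    stdNormalCDF b - stdNormalCDF a ≤ 2 / 5 * (b - a) := by
  have hIoc : stdNormalCDF b - stdNormalCDF a = (gaussianReal 0 1).real (Set.Ioc a b) := by
    rw [← Set.Iic_sdiff_Iic, measureReal_sdiff (Set.Iic_subset_Iic.mpr hab) measurableSet_Iic]
    rfl
  rw [hIoc, measureReal_def, gaussianReal_apply_eq_integral 0 one_ne_zero, ENNReal.toReal_ofReal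
    (setIntegral_nonneg measurableSet_Ioc fun x _ => gaussianPDFReal_nonneg _ _ _)]
  calc ∫ x in Set.Ioc a b, gaussianPDFReal 0 1 x ≤ ∫ _ in Set.Ioc a b, (2 / 5 : ℝ) :=
        setIntegral_mono_on (integrable_gaussianPDFReal 0 1).integrableOn (by simp)
          measurableSet_Ioc fun x _ => gaussianPDFReal_zero_one_le x
    _ = 2 / 5 * (b - a) := by simp [hab, mul_comm]

/-- The distribution function `z ↦ P(X ≤ z)` of a statistic `X` on a finite sample space with the
uniform law. -/
noncomputable def uniformCDF {Ω : Type*} [Fintype Ω] (X : Ω → ℝ) (z : ℝ) : ℝ :=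
  𝔼 ω, (Set.Iic z).indicator (1 : ℝ → ℝ) (X ω)

/-- The continuous relaxation of the indicator of `(-∞, z]`: equal to `1` on `(-∞, z]`, to `0` on
`[z + l, ∞)` and affine in between. -/
noncomputable def ramp (z l x : ℝ) : ℝ := max 0 (min 1 ((z + l - x) / l))

section Ramp

variable {z l : ℝ}

theorem continuous_ramp (z l : ℝ) : Continuous (ramp z l) := by
  unfold ramp; fun_prop

theorem ramp_nonneg (z l x : ℝ) : 0 ≤ ramp z l x := le_max_left _ _

theorem ramp_le_one (z l x : ℝ) : ramp z l x ≤ 1 := max_le zero_le_one (min_le_left _ _)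

theorem integrable_ramp (z l : ℝ) : Integrable (ramp z l) (gaussianReal 0 1) :=
  .of_bound (continuous_ramp z l).aestronglyMeasurable 1 (ae_of_all _ fun x => by
    rw [Real.norm_of_nonneg (ramp_nonneg z l x)]; exact ramp_le_one z l x)

theorem abs_ramp_sub_integral_le_one (z l x : ℝ) :
    |ramp z l x - ∫ y, ramp z l y ∂gaussianReal 0 1| ≤ 1 := by
  have hle : ∫ y, ramp z l y ∂gaussianReal 0 1 ≤ 1 := by
    simpa using integral_mono (integrable_ramp z l) (integrable_const 1) (ramp_le_one z l)
  rw [abs_le]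
  constructor <;> linarith [ramp_nonneg z l x, ramp_le_one z l x,
    integral_nonneg (μ := gaussianReal 0 1) (f := ramp z l) (ramp_nonneg z l)]

theorem indicator_Iic_le_ramp (hl : 0 < l) (z x : ℝ) :
    (Set.Iic z).indicator 1 x ≤ ramp z l x := by
  refine Set.indicator_apply_le' (fun hx => ?_) fun _ => ramp_nonneg z l x
  refine le_max_of_le_right (le_min le_rfl ?_)
  rw [Pi.one_apply, one_le_div hl]
  linarith [Set.mem_Iic.mp hx]

theorem ramp_le_indicator_Iic (hl : 0 < l) (z x : ℝ) :
    ramp z l x ≤ (Set.Iic (z + l)).indicator 1 x := by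
  refine Set.le_indicator_apply (fun _ => ramp_le_one z l x) fun hx => max_le le_rfl ?_
  refine min_le_of_right_le (div_nonpos_of_nonpos_of_nonneg ?_ hl.le)
  linarith [Set.notMem_Iic.mp hx]

theorem monotone_indicator_Iic_one (x : ℝ) :
    Monotone fun u => (Set.Iic u).indicator (1 : ℝ → ℝ) x := fun _ _ hab =>
  Set.indicator_le_indicator_of_subset (Set.Iic_subset_Iic.mpr hab) (fun _ => zero_le_one) x

theorem ramp_eq_integral_indicator (hl : 0 < l) (z x : ℝ) :
    ramp z l x = l⁻¹ * ∫ u in z..z + l, (Set.Iic u).indicator 1 x := by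
  have hswap (u : ℝ) : (Set.Iic u).indicator (1 : ℝ → ℝ) x = (Set.Ici x).indicator 1 u := by
    simp [Set.indicator_apply]
  have hinter : Set.Ici x ∩ Set.Icc z (z + l) = Set.Icc (max x z) (z + l) := by
    ext u; simp [and_assoc]
  have hmin : min 1 ((z + l - x) / l) = (z + l - max x z) / l := by
    rw [← min_sub_sub_left, add_sub_cancel_left, ← min_div_div_right hl.le, div_self hl.ne',
      min_comm]
  simp only [hswap]
  rw [intervalIntegral.integral_of_le (by linarith), ← integral_Icc_eq_integral_Ioc,
    integral_indicator_one measurableSet_Ici, measureReal_restrict_apply measurableSet_Ici, hinter,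
    Real.volume_real_Icc, inv_mul_eq_div, ramp, hmin, max_comm (z + l - max x z),
    ← max_div_div_right hl.le, zero_div]

end Ramp

section UniformCDF

variable {Ω : Type*} [Fintype Ω] {X S : Ω → ℝ} {z l A B δ : ℝ}

theorem uniformCDF_eq_card_div_card (X : Ω → ℝ) (z : ℝ) :
    uniformCDF X z = (univ.filter fun ω => X ω ≤ z).card / Fintype.card Ω := by
  rw [uniformCDF, Fintype.expect_eq_sum_div_card]
  simp [Set.indicator_apply]

theorem uniformCDF_nonneg (X : Ω → ℝ) (z : ℝ) : 0 ≤ uniformCDF X z :=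
  expect_nonneg fun _ _ => Set.indicator_nonneg (fun _ _ => zero_le_one) _

theorem uniformCDF_le_one [Nonempty Ω] (X : Ω → ℝ) (z : ℝ) : uniformCDF X z ≤ 1 :=
  expect_le univ_nonempty fun _ _ => Set.indicator_le_self' (fun _ _ => zero_le_one) _

theorem monotone_uniformCDF (X : Ω → ℝ) : Monotone (uniformCDF X) := fun _ _ hab =>
  expect_le_expect fun ω _ => monotone_indicator_Iic_one (X ω) hab

theorem uniformCDF_mul_add {μ σ : ℝ} (hσ : 0 < σ) (X : Ω → ℝ) (z : ℝ) :
    uniformCDF (fun ω => σ * X ω + μ) z = uniformCDF X ((z - μ) / σ) := by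
  simp only [uniformCDF, Set.indicator_apply, Set.mem_Iic, Pi.one_apply, le_div_iff₀' hσ,
    le_sub_iff_add_le]

theorem integral_indicator_Iic_eq_stdNormalCDF (z : ℝ) :
    ∫ x, (Set.Iic z).indicator 1 x ∂gaussianReal 0 1 = stdNormalCDF z := by
  rw [integral_indicator_one measurableSet_Iic]; rfl

theorem stdNormalCDF_le_integral_ramp (hl : 0 < l) (z : ℝ) :
    stdNormalCDF z ≤ ∫ x, ramp z l x ∂gaussianReal 0 1 := by
  rw [← integral_indicator_Iic_eq_stdNormalCDF]
  exact integral_mono ((integrable_const 1).indicator measurableSet_Iic) (integrable_ramp z l)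
    (indicator_Iic_le_ramp hl z)

theorem integral_ramp_le_stdNormalCDF (hl : 0 < l) (z : ℝ) :
    ∫ x, ramp z l x ∂gaussianReal 0 1 ≤ stdNormalCDF (z + l) := by
  rw [← integral_indicator_Iic_eq_stdNormalCDF]
  exact integral_mono (integrable_ramp z l) ((integrable_const 1).indicator measurableSet_Iic)
    (ramp_le_indicator_Iic hl z)

theorem abs_uniformCDF_sub_stdNormalCDF_le (hl : 0 < l)
    (h : ∀ z, |𝔼 ω, ramp z l (X ω) - ∫ x, ramp z l x ∂gaussianReal 0 1| ≤ δ) (z : ℝ) :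
    |uniformCDF X z - stdNormalCDF z| ≤ δ + 2 / 5 * l := by
  have hupper : uniformCDF X z ≤ 𝔼 ω, ramp z l (X ω) :=
    expect_le_expect fun ω _ => indicator_Iic_le_ramp hl z (X ω)
  have hlower : 𝔼 ω, ramp (z - l) l (X ω) ≤ uniformCDF X z :=
    expect_le_expect fun ω _ => by simpa using ramp_le_indicator_Iic hl (z - l) (X ω)
  have hΦupper := stdNormalCDF_sub_le (show z ≤ z + l by linarith)
  have hΦlower := stdNormalCDF_sub_le (show z - l ≤ z by linarith)
  rw [abs_le]
  constructor
  · linarith [(abs_le.mp (h (z - l))).1, stdNormalCDF_le_integral_ramp hl (z - l)]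
  · linarith [(abs_le.mp (h z)).2, integral_ramp_le_stdNormalCDF hl z]

/-! ### Spread-out statistics -/

/-- A statistic is `(A, B)`-spread when it charges every interval `(t, t + l]` by at most
`A * l + B`. -/
def IsSpread (S : Ω → ℝ) (A B : ℝ) : Prop :=
  ∀ t l : ℝ, 0 ≤ l → uniformCDF S (t + l) - uniformCDF S t ≤ A * l + B

theorem IsSpread.mono {S : Ω → ℝ} {A A' B B' : ℝ} (h : IsSpread S A B) (hA : A ≤ A')
    (hB : B ≤ B') : IsSpread S A' B' := fun t l hl =>
  (h t l hl).trans (by gcongr)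

theorem isSpread_of_abs_uniformCDF_sub_le {μ σ : ℝ} (hσ : 0 < σ)
    (h : ∀ z, |uniformCDF S z - stdNormalCDF ((z - μ) / σ)| ≤ δ) :
    IsSpread S (2 / 5 / σ) (2 * δ) := fun t l hl => by
  have hle : (t - μ) / σ ≤ (t + l - μ) / σ := by gcongr; linarith
  have hΦ := stdNormalCDF_sub_le hle
  rw [show (t + l - μ) / σ - (t - μ) / σ = l / σ by ring] at hΦ
  linarith [(abs_le.mp (h (t + l))).2, (abs_le.mp (h t)).1,
    show 2 / 5 / σ * l = 2 / 5 * (l / σ) by ring]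

theorem expect_ramp_add_eq_integral_uniformCDF (hl : 0 < l) (S : Ω → ℝ) (z x : ℝ) :
    𝔼 ω, ramp z l (S ω + x) = l⁻¹ * ∫ u in z - x..z - x + l, uniformCDF S u := by
  have hshift (ω : Ω) : ramp z l (S ω + x) = ramp (z - x) l (S ω) := by
    simp only [ramp]; ring_nf
  simp only [hshift, ramp_eq_integral_indicator hl, ← mul_expect, uniformCDF,
    Fintype.expect_eq_sum_div_card, intervalIntegral.integral_div]
  rw [intervalIntegral.integral_finsetSum fun ω _ =>
    (monotone_indicator_Iic_one (S ω)).intervalIntegrable]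

theorem abs_expect_ramp_sub_le (hS : IsSpread S A B) (hl : 0 < l) (z x y : ℝ) :
    |𝔼 ω, ramp z l (S ω + x) - 𝔼 ω, ramp z l (S ω + y)| ≤ |x - y| * (A + B / l) := by
  have hint (a b : ℝ) : IntervalIntegrable (uniformCDF S) volume a b :=
    (monotone_uniformCDF S).intervalIntegrable
  have hint' (a b : ℝ) : IntervalIntegrable (fun u => uniformCDF S (u + l)) volume a b :=
    ((monotone_uniformCDF S).comp (add_left_mono)).intervalIntegrable
  have hbound : |∫ u in z - y..z - x, (uniformCDF S (u + l) - uniformCDF S u)|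
      ≤ (A * l + B) * |z - x - (z - y)| := by
    refine intervalIntegral.norm_integral_le_of_norm_le_const (E := ℝ) fun u _ => ?_
    rw [Real.norm_of_nonneg (sub_nonneg.mpr (monotone_uniformCDF S (by linarith)))]
    exact hS u l hl.le
  rw [intervalIntegral.integral_sub (hint' _ _) (hint _ _),
    intervalIntegral.integral_comp_add_right (uniformCDF S) l] at hbound
  rw [expect_ramp_add_eq_integral_uniformCDF hl, expect_ramp_add_eq_integral_uniformCDF hl,
    ← mul_sub, intervalIntegral.integral_interval_sub_interval_comm (hint _ _) (hint _ _)
    (hint _ _), intervalIntegral.integral_symm (z - y), intervalIntegral.integral_symm (z - y + l),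
    abs_mul, abs_of_pos (inv_pos.mpr hl), neg_sub_neg]
  calc l⁻¹ * _ ≤ l⁻¹ * ((A * l + B) * |z - x - (z - y)|) := by gcongr
    _ = |x - y| * (A + B / l) := by
        rw [show z - x - (z - y) = y - x by ring, abs_sub_comm y x]; field_simp

end UniformCDF

section SteinRegularity

variable {Ω : Type*} [Fintype Ω]

theorem hasDerivAt_expect_comp_add {f : ℝ → ℝ} (hf : Differentiable ℝ f) (S : Ω → ℝ) (x : ℝ) :
    HasDerivAt (fun x => 𝔼 ω, f (S ω + x)) (𝔼 ω, deriv f (S ω + x)) x := by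
  simp only [Fintype.expect_eq_sum_div_card]
  exact (HasDerivAt.fun_sum fun ω _ =>
    (hf (S ω + x)).hasDerivAt.comp_const_add (S ω) x).div_const _

theorem abs_sub_le_of_abs_deriv_le {f : ℝ → ℝ} {D : ℝ} (hf : Differentiable ℝ f)
    (hD : ∀ w, |deriv f w| ≤ D) (x y : ℝ) : |f x - f y| ≤ D * |x - y| :=
  Convex.norm_image_sub_le_of_norm_deriv_le (fun w _ => hf w) (fun w _ => hD w) convex_univ
    (Set.mem_univ y) (Set.mem_univ x)

theorem abs_expect_deriv_sub_le [Nonempty Ω] {f h : ℝ → ℝ} {N D F₀ M : ℝ} (S : Ω → ℝ)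
    (hf : Differentiable ℝ f) (hstein : ∀ w, deriv f w = w * f w + (h w - N))
    (hF₀ : ∀ w, |f w| ≤ F₀) (hD : ∀ w, |deriv f w| ≤ D) {a : ℝ}
    (hM : |𝔼 ω, h (S ω + a) - 𝔼 ω, h (S ω)| ≤ |a| * M) :
    |𝔼 ω, deriv f (S ω + a) - 𝔼 ω, deriv f (S ω)| ≤ |a| * (F₀ + D * 𝔼 ω, |S ω| + M) := by
  have hsplit (s : ℝ) : deriv f (s + a) - deriv f s
      = (a * f (s + a) + s * (f (s + a) - f s)) + (h (s + a) - h s) := by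
    rw [hstein, hstein]; ring
  have hpointwise (s : ℝ) : |a * f (s + a) + s * (f (s + a) - f s)| ≤ |a| * (F₀ + D * |s|) := by
    have hlip := abs_sub_le_of_abs_deriv_le hf hD (s + a) s
    rw [add_sub_cancel_left] at hlip
    calc _ ≤ |a| * |f (s + a)| + |s| * |f (s + a) - f s| := by
          rw [← abs_mul, ← abs_mul]; exact abs_add_le _ _
      _ ≤ |a| * F₀ + |s| * (D * |a|) := by gcongr; exact hF₀ _
      _ = |a| * (F₀ + D * |s|) := by ring
  have hsmooth : |𝔼 ω, (a * f (S ω + a) + S ω * (f (S ω + a) - f (S ω)))|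
      ≤ |a| * (F₀ + D * 𝔼 ω, |S ω|) :=
    calc _ ≤ 𝔼 ω, |a| * (F₀ + D * |S ω|) :=
          (abs_expect_le _ _).trans (expect_le_expect fun ω _ => hpointwise (S ω))
      _ = _ := by rw [← mul_expect, expect_add_distrib, Fintype.expect_const, mul_expect]
  rw [← expect_sub_distrib] at hM ⊢
  simp only [hsplit]
  rw [expect_add_distrib, mul_add]
  exact (abs_add_le _ _).trans (add_le_add hsmooth hM)

theorem abs_sub_le_of_abs_deriv_le_add_mul_abs {G G' : ℝ → ℝ} {P Q : ℝ}
    (hG : ∀ x, HasDerivAt G (G' x) x) (hQ : 0 ≤ Q) (hbound : ∀ x, |G' x| ≤ P + Q * |x|)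
    (x y : ℝ) : |G x - G y| ≤ |x - y| * (P + Q * ((|x| + |y|) / 2)) := by
  have hline (s : ℝ) : HasDerivAt (fun s => G (y + s * (x - y)) - G y)
      (G' (y + s * (x - y)) * (x - y)) s :=
    ((hG _).comp s ((hasDerivAt_mul_const (x - y)).const_add y)).sub_const _
  have hmajorant (s : ℝ) : HasDerivAt
      (fun s => |x - y| * (P * s + Q * ((s - s ^ 2 / 2) * |y| + s ^ 2 / 2 * |x|)))
      (|x - y| * (P + Q * ((1 - s) * |y| + s * |x|))) s := by
    have hid := hasDerivAt_id' s
    have hsq : HasDerivAt (fun s : ℝ => s ^ 2 / 2) s s :=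
      ((hid.pow 2).div_const 2).congr_deriv (by simp)
    exact (((hid.const_mul P).add ((((hid.sub hsq).mul_const |y|).add
      (hsq.mul_const |x|)).const_mul Q)).const_mul |x - y|).congr_deriv (by ring)
  have hsegment : ∀ s ∈ Set.Ico (0 : ℝ) 1, ‖G' (y + s * (x - y)) * (x - y)‖
      ≤ |x - y| * (P + Q * ((1 - s) * |y| + s * |x|)) := fun s hs => by
    have hconv : |y + s * (x - y)| ≤ (1 - s) * |y| + s * |x| := by
      rw [show y + s * (x - y) = (1 - s) * y + s * x by ring]
      refine (abs_add_le _ _).trans_eq ?_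
      rw [abs_mul, abs_mul, abs_of_nonneg hs.1, abs_of_pos (sub_pos.mpr hs.2)]
    rw [norm_mul, mul_comm]
    exact mul_le_mul_of_nonneg_left ((hbound _).trans (by gcongr)) (norm_nonneg _)
  have hmean := image_norm_le_of_norm_deriv_right_le_deriv_boundary
    (fun s _ => (hline s).continuousAt.continuousWithinAt)
    (fun s _ => (hline s).hasDerivWithinAt) (by simp) hmajorant hsegment
    (Set.right_mem_Icc.mpr zero_le_one)
  rw [Real.norm_eq_abs, one_mul, add_sub_cancel] at hmean
  exact hmean.trans_eq (by ring)

theorem abs_mul_deriv_sub_increment_le {F F' : ℝ → ℝ} {K : ℝ} (hF : ∀ x, HasDerivAt F (F' x) x)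
    (hK : ∀ x, |F' x - F' 0| ≤ |x| * K) (a b d : ℝ) :
    |d * F' a - (F b - F (b - d))| ≤ |d| * (K * (|a| + (|b| + |b - d|) / 2)) := by
  have hK0 : 0 ≤ K := by simpa using (abs_nonneg _).trans (hK 1)
  have hderiv (x : ℝ) : HasDerivAt (fun x => F x - F' a * x) (F' x - F' a) x :=
    ((hF x).sub ((hasDerivAt_id x).const_mul (F' a))).congr_deriv (by ring)
  have hbound (x : ℝ) : |F' x - F' a| ≤ K * |a| + K * |x| :=
    calc |F' x - F' a| ≤ |F' x - F' 0| + |F' a - F' 0| := by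
          rw [abs_sub_comm (F' a)]; exact abs_sub_le _ _ _
      _ ≤ K * |a| + K * |x| := by linarith [hK x, hK a]
  have hmean := abs_sub_le_of_abs_deriv_le_add_mul_abs hderiv hK0 hbound b (b - d)
  rw [sub_sub_cancel] at hmean
  calc |d * F' a - (F b - F (b - d))|
      = |F b - F' a * b - (F (b - d) - F' a * (b - d))| := by rw [← abs_neg]; ring_nf
    _ ≤ _ := hmean
    _ = _ := by ring

end SteinRegularity

/-! ### Uniform permutations and the exchangeable pair -/

section PairPerm

variable {α : Type*} [DecidableEq α]

/-- A permutation taking `p` to `i` and `q` to `j` (for `i ≠ j` and `p ≠ q`) and fixing all other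
points than these four; it transports the images of a uniform permutation to new arguments. -/
def pairPerm (i j p q : α) : Perm α := swap i (swap j q p) * swap j q

theorem pairPerm_apply_left (i j p q : α) : pairPerm i j p q p = i := by
  simp [pairPerm]

theorem pairPerm_apply_right {i j p q : α} (hij : i ≠ j) (hpq : p ≠ q) :
    pairPerm i j p q q = j := by
  have h : j ≠ swap j q p := fun h => hpq (by simpa using (congrArg (swap j q) h).symm)
  simp [pairPerm, swap_apply_of_ne_of_ne hij.symm h]

theorem pairPerm_apply_of_ne {i j p q x : α} (hi : x ≠ i) (hj : x ≠ j) (hp : x ≠ p) (hq : x ≠ q) :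
    pairPerm i j p q x = x := by
  have h : x ≠ swap j q p := fun h => hp (by
    simpa [swap_apply_of_ne_of_ne hj hq] using congrArg (swap j q) h)
  simp [pairPerm, swap_apply_of_ne_of_ne hj hq, swap_apply_of_ne_of_ne hi h]

end PairPerm

section UniformPermutation

theorem expect_comp_mul_right {G : Type*} [Group G] [Fintype G] (F : G → ℝ) (τ : G) :
    𝔼 g, F (g * τ) = 𝔼 g, F g :=
  Fintype.expect_equiv (Equiv.mulRight τ) _ _ fun _ => rfl

theorem expect_expect_comp_mul_right {G Ω : Type*} [Group G] [Fintype G] [Fintype Ω] [Nonempty Ω]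
    (F : G → ℝ) (τ : Ω → G) : 𝔼 g, 𝔼 ω, F (g * τ ω) = 𝔼 g, F g := by
  rw [expect_comm]
  simp only [expect_comp_mul_right, Fintype.expect_const]

variable {α : Type*} [Fintype α]

theorem expect_offDiag_comp_perm (σ : Perm α) (φ : α → α → ℝ) :
    𝔼 x ∈ univ.offDiag, φ (σ x.1) (σ x.2) = 𝔼 x ∈ univ.offDiag, φ x.1 x.2 :=
  expect_nbij' (fun x => (σ x.1, σ x.2)) (fun x => (σ⁻¹ x.1, σ⁻¹ x.2)) (by simp) (by simp)
    (by simp) (by simp) (by simp)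

theorem card_offDiag_univ :
    (#(univ : Finset α).offDiag : ℝ) = Fintype.card α * (Fintype.card α - 1) := by
  rw [offDiag_card, card_univ, Nat.cast_sub (Nat.le_mul_self _)]
  push_cast
  ring

theorem sum_offDiag_univ (φ : α → α → ℝ) :
    ∑ x ∈ univ.offDiag, φ x.1 x.2 = ∑ k, ∑ l, φ k l - ∑ k, φ k k := by
  classical
  rw [eq_sub_iff_add_eq', ← sum_diag univ fun x => φ x.1 x.2,
    ← sum_union (disjoint_diag_offDiag _), diag_union_offDiag, sum_product]

variable [DecidableEq α]

theorem expect_perm_apply (i : α) (φ : α → ℝ) : 𝔼 π : Perm α, φ (π i) = 𝔼 y, φ y := by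
  have : Nonempty α := ⟨i⟩
  have hinvariant (π : Perm α) : 𝔼 y, φ (π y) = 𝔼 y, φ y :=
    Fintype.expect_equiv π _ _ fun _ => rfl
  rw [← expect_expect_comp_mul_right (fun π : Perm α => φ (π i)) fun y => swap i y]
  simp only [Perm.mul_apply, swap_apply_left, hinvariant, Fintype.expect_const]

theorem expect_offDiag_expect_pairPerm {i j : α} (hij : i ≠ j) (φ : α → α → ℝ)
    (G : Perm α → ℝ) :
    𝔼 x ∈ univ.offDiag, 𝔼 π : Perm α, φ (π i) (π j) * G (π * pairPerm i j x.1 x.2)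
      = (𝔼 x ∈ univ.offDiag, φ x.1 x.2) * 𝔼 π, G π := by
  have htransport : ∀ x ∈ (univ : Finset α).offDiag,
      𝔼 π : Perm α, φ (π i) (π j) * G (π * pairPerm i j x.1 x.2)
        = 𝔼 π : Perm α, φ (π x.1) (π x.2) * G π := fun x hx => by
    rw [← expect_comp_mul_right (fun π => φ (π x.1) (π x.2) * G π) (pairPerm i j x.1 x.2)]
    simp only [Perm.mul_apply, pairPerm_apply_left,
      pairPerm_apply_right hij (mem_offDiag.mp hx).2.2]
  rw [expect_congr rfl htransport, expect_comm]
  simp only [← expect_mul, expect_offDiag_comp_perm, ← mul_expect]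

theorem expect_perm_apply_pair {i j : α} (hij : i ≠ j) (φ : α → α → ℝ) :
    𝔼 π : Perm α, φ (π i) (π j) = 𝔼 x ∈ univ.offDiag, φ x.1 x.2 := by
  have hne : (univ : Finset α).offDiag.Nonempty := ⟨(i, j), by simpa using hij⟩
  simpa [expect_const hne, Fintype.expect_const] using
    expect_offDiag_expect_pairPerm hij φ fun _ => 1

end UniformPermutation

section PermSum

variable {α : Type*}

/-- The loss in `permSum c π` caused by exchanging the images of `i` and `j`. -/
def swapDiff (c : α → α → ℝ) (i j : α) (π : Perm α) : ℝ :=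
  c i (π i) + c j (π j) - c i (π j) - c j (π i)

theorem swapDiff_mul_swap [DecidableEq α] (c : α → α → ℝ) (i j : α) (π : Perm α) :
    swapDiff c i j (π * swap i j) = -swapDiff c i j π := by
  simp only [swapDiff, Perm.mul_apply, swap_apply_left, swap_apply_right]; ring

variable [Fintype α] {c : α → α → ℝ}

/-- The statistic `∑ i, c i (π i)` of a permutation `π`. -/
def permSum (c : α → α → ℝ) (π : Perm α) : ℝ := ∑ i, c i (π i)

/-- An array with vanishing row and column sums, so that `permSum c` has mean zero. -/
structure IsCentered (c : α → α → ℝ) : Prop where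
  row : ∀ i, ∑ j, c i j = 0
  col : ∀ j, ∑ i, c i j = 0

theorem sum_swapDiff (hc : IsCentered c) (π : Perm α) :
    ∑ i, ∑ j, swapDiff c i j π = 2 * Fintype.card α * permSum c π := by
  have hrow (i : α) : ∑ j, c i (π j) = 0 := (Equiv.sum_comp π (c i)).trans (hc.row i)
  simp only [swapDiff, sum_sub_distrib, sum_add_distrib, hrow, hc.col, sum_const, card_univ,
    nsmul_eq_mul, ← mul_sum, permSum]
  ring

variable [DecidableEq α]

theorem permSum_mul_swap (c : α → α → ℝ) (i j : α) (π : Perm α) :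
    permSum c (π * swap i j) = permSum c π - swapDiff c i j π := by
  rcases eq_or_ne i j with rfl | hij
  · simp [permSum, swapDiff]
  rw [eq_sub_iff_add_eq, ← eq_sub_iff_add_eq', permSum, permSum, ← sum_sub_distrib,
    Fintype.sum_eq_add i j hij]
  · simp only [swapDiff, Perm.mul_apply, swap_apply_left, swap_apply_right]; ring
  · rintro x ⟨hxi, hxj⟩
    simp [swap_apply_of_ne_of_ne hxi hxj]

theorem expect_swapDiff_mul_increment (c : α → α → ℝ) (f : ℝ → ℝ) (i j : α) :
    𝔼 π, swapDiff c i j π * (f (permSum c π) - f (permSum c π - swapDiff c i j π))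
      = 2 * 𝔼 π, swapDiff c i j π * f (permSum c π) := by
  have hswap := expect_comp_mul_right (fun π => swapDiff c i j π * f (permSum c π)) (swap i j)
  simp only [swapDiff_mul_swap, permSum_mul_swap, neg_mul, expect_neg_distrib] at hswap
  simp only [mul_sub, expect_sub_distrib]
  linarith

theorem stein_identity (hc : IsCentered c) (f : ℝ → ℝ) :
    4 * Fintype.card α * 𝔼 π, permSum c π * f (permSum c π)
      = ∑ i, ∑ j, 𝔼 π,
          swapDiff c i j π * (f (permSum c π) - f (permSum c π - swapDiff c i j π)) := by
  have hsum (π : Perm α) : ∑ i, ∑ j, swapDiff c i j π * f (permSum c π)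
      = 2 * Fintype.card α * (permSum c π * f (permSum c π)) := by
    simp only [← sum_mul, sum_swapDiff hc, mul_assoc]
  simp only [expect_swapDiff_mul_increment, ← mul_sum, ← expect_sum_comm, hsum, ← mul_expect]
  ring

theorem expect_permSum (c : α → α → ℝ) : 𝔼 π, permSum c π = ∑ i, 𝔼 j, c i j := by
  simp only [permSum, expect_sum_comm, expect_perm_apply]

theorem IsCentered.expect_permSum_eq_zero (hc : IsCentered c) : 𝔼 π, permSum c π = 0 := by
  rw [expect_permSum]
  simp [Fintype.expect_eq_sum_div_card, hc.row]

theorem IsCentered.expect_mul_apply_of_ne (hc : IsCentered c) {i j : α} (hij : i ≠ j) :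
    𝔼 π : Perm α, c i (π i) * c j (π j)
      = -(∑ k, c i k * c j k) / (Fintype.card α * (Fintype.card α - 1)) := by
  rw [expect_perm_apply_pair hij fun k l => c i k * c j l, expect_eq_sum_div_card,
    sum_offDiag_univ fun k l => c i k * c j l, card_offDiag_univ]
  simp [← mul_sum, hc.row]

theorem IsCentered.sum_expect_mul_apply [Nontrivial α] (hc : IsCentered c) (i : α) :
    ∑ j, 𝔼 π : Perm α, c i (π i) * c j (π j) = (∑ k, c i k ^ 2) / (Fintype.card α - 1) := by
  have hcard : (1 : ℝ) < Fintype.card α := by exact_mod_cast Fintype.one_lt_card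
  have hgram : ∑ j ∈ univ.erase i, ∑ k, c i k * c j k = -∑ k, c i k ^ 2 := by
    rw [sum_erase_eq_sub (mem_univ i), sum_comm]
    simp [← mul_sum, hc.col, pow_two]
  rw [← add_sum_erase _ _ (mem_univ i), expect_perm_apply i fun k => c i k * c i k,
    sum_congr rfl fun j hj => hc.expect_mul_apply_of_ne (ne_of_mem_erase hj).symm, ← sum_div,
    sum_neg_distrib, hgram, neg_neg, Fintype.expect_eq_sum_div_card]
  simp only [← pow_two]
  field_simp [show (Fintype.card α : ℝ) - 1 ≠ 0 by linarith]
  ring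

theorem IsCentered.expect_permSum_sq [Nontrivial α] (hc : IsCentered c) :
    𝔼 π, permSum c π ^ 2 = (∑ i, ∑ j, c i j ^ 2) / (Fintype.card α - 1) := by
  have hexpand (π : Perm α) : permSum c π ^ 2 = ∑ i, ∑ j, c i (π i) * c j (π j) := by
    rw [pow_two, permSum, sum_mul_sum]
  simp only [hexpand, expect_sum_comm, hc.sum_expect_mul_apply, sum_div]

end PermSum

/-! ### Double centering -/

section PowerMean

theorem abs_sum_pow_three_le {ι : Type*} (s : Finset ι) (f : ι → ℝ) :
    |∑ i ∈ s, f i| ^ 3 ≤ (#s : ℝ) ^ 2 * ∑ i ∈ s, |f i| ^ 3 := by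
  rcases s.eq_empty_or_nonempty with rfl | hs
  · simp
  have hcard : (0 : ℝ) < (#s : ℝ) ^ 2 := by have := hs.card_pos; positivity
  calc |∑ i ∈ s, f i| ^ 3 ≤ (∑ i ∈ s, |f i|) ^ 3 := by gcongr; exact abs_sum_le_sum_abs _ _
    _ ≤ (#s : ℝ) ^ 2 * ∑ i ∈ s, |f i| ^ 3 :=
        (div_le_iff₀' hcard).mp <|
          pow_sum_div_card_le_sum_pow (n := 2) fun i _ => abs_nonneg (f i)

theorem card_mul_abs_expect_pow_three_le {ι : Type*} [Fintype ι] (f : ι → ℝ) :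
    Fintype.card ι * |𝔼 i, f i| ^ 3 ≤ ∑ i, |f i| ^ 3 := by
  rcases isEmpty_or_nonempty ι with _ | _
  · simp
  have hpow := abs_sum_pow_three_le univ f
  have hcard : (0 : ℝ) < Fintype.card ι := by exact_mod_cast Fintype.card_pos
  rw [← Fintype.card_mul_expect, abs_mul, abs_of_pos hcard, card_univ] at hpow
  nlinarith [mul_pos hcard hcard]

theorem abs_add_add_pow_three_le (a b c : ℝ) :
    |a + b + c| ^ 3 ≤ 9 * (|a| ^ 3 + |b| ^ 3 + |c| ^ 3) := by
  have := abs_sum_pow_three_le univ ![a, b, c]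
  norm_num [Fin.sum_univ_three] at this
  exact this

theorem abs_add_pow_three_le {t : ℝ} (ht0 : 0 < t) (ht1 : t < 1) (a b : ℝ) :
    |a + b| ^ 3 ≤ |a| ^ 3 / (1 - t) ^ 2 + |b| ^ 3 / t ^ 2 := by
  have hs : 0 < 1 - t := sub_pos.mpr ht1
  -- convexity of `x ↦ x ^ 3` at `(1 - t) * (|a| / (1 - t)) + t * (|b| / t)`
  have hconv := (convexOn_pow 3).2 (div_nonneg (abs_nonneg a) hs.le)
    (div_nonneg (abs_nonneg b) ht0.le) hs.le ht0.le (by ring)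
  simp only [smul_eq_mul, mul_div_cancel₀ _ hs.ne', mul_div_cancel₀ _ ht0.ne'] at hconv
  calc |a + b| ^ 3 ≤ (|a| + |b|) ^ 3 := by gcongr; exact abs_add_le a b
    _ ≤ _ := hconv
    _ = _ := by field_simp

end PowerMean

/-- The array `d` with its row and column means removed, in Hoeffding's normalization. -/
noncomputable def doubleCenter {β : Type*} [Fintype β] (d : β → β → ℝ) (x y : β) : ℝ :=
  d x y - 𝔼 y', d x y' - 𝔼 x', d x' y + 𝔼 x', 𝔼 y', d x' y'

section DoubleCenter

variable {β : Type*} [Fintype β] {d : β → β → ℝ}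

theorem isCentered_doubleCenter (d : β → β → ℝ) : IsCentered (doubleCenter d) where
  row x := by
    simp only [doubleCenter, sum_sub_distrib, sum_add_distrib, sum_const, card_univ, nsmul_eq_mul,
      ← Fintype.card_mul_expect]
    rw [expect_comm univ univ d]
    ring
  col y := by
    simp only [doubleCenter, sum_sub_distrib, sum_add_distrib, sum_const, card_univ, nsmul_eq_mul,
      ← Fintype.card_mul_expect]
    ring

theorem IsCentered.expect_row (hd : IsCentered d) (x : β) : 𝔼 y, d x y = 0 := by
  rw [Fintype.expect_eq_sum_div_card, hd.row, zero_div]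

theorem IsCentered.expect_col (hd : IsCentered d) (y : β) : 𝔼 x, d x y = 0 := by
  rw [Fintype.expect_eq_sum_div_card, hd.col, zero_div]

theorem IsCentered.doubleCenter_eq (hd : IsCentered d) : doubleCenter d = d := by
  ext x y
  simp [doubleCenter, hd.expect_row, hd.expect_col]

theorem permSum_eq_permSum_doubleCenter_add (d : β → β → ℝ) (π : Perm β) :
    permSum d π = permSum (doubleCenter d) π + Fintype.card β * 𝔼 x, 𝔼 y, d x y := by
  have hcol : ∑ x, 𝔼 x', d x' (π x) = Fintype.card β * 𝔼 x, 𝔼 y, d x y := by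
    rw [Equiv.sum_comp π fun y => 𝔼 x', d x' y, ← Fintype.card_mul_expect, expect_comm]
  simp only [permSum, doubleCenter, sum_add_distrib, sum_sub_distrib, hcol, sum_const, card_univ,
    nsmul_eq_mul, ← Fintype.card_mul_expect (fun x => 𝔼 y, d x y)]
  ring

theorem sum_sub_expect_sq (f : β → ℝ) :
    ∑ x, (f x - 𝔼 y, f y) ^ 2 = ∑ x, f x ^ 2 - Fintype.card β * (𝔼 x, f x) ^ 2 := by
  simp only [sub_sq, sum_add_distrib, sum_sub_distrib, ← sum_mul, ← mul_sum, sum_const, card_univ,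
    nsmul_eq_mul, ← Fintype.card_mul_expect f]
  ring

theorem sum_doubleCenter_sq (d : β → β → ℝ) :
    ∑ x, ∑ y, doubleCenter d x y ^ 2
      = ∑ x, ∑ y, d x y ^ 2 - Fintype.card β * ∑ x, (𝔼 y, d x y) ^ 2
        - Fintype.card β * ∑ y, (𝔼 x, d x y) ^ 2
        + (Fintype.card β * 𝔼 x, 𝔼 y, d x y) ^ 2 := by
  let e x y := d x y - 𝔼 y', d x y'
  have hcol (y : β) : 𝔼 x, e x y = 𝔼 x, d x y - 𝔼 y', 𝔼 x, d x y' := by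
    simp only [e, expect_sub_distrib, expect_comm univ univ d]
  have he (x y : β) : doubleCenter d x y = e x y - 𝔼 x', e x' y := by
    rw [hcol, expect_comm]
    simp only [doubleCenter, e]
    ring
  calc ∑ x, ∑ y, doubleCenter d x y ^ 2
      = ∑ y, ∑ x, (e x y - 𝔼 x', e x' y) ^ 2 := by rw [sum_comm]; simp only [he]
    _ = ∑ x, ∑ y, e x y ^ 2 - Fintype.card β * ∑ y, (𝔼 x, e x y) ^ 2 := by
        simp only [sum_sub_expect_sq, sum_sub_distrib, ← mul_sum]
        rw [sum_comm]
    _ = _ := by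
        simp only [hcol, sum_sub_expect_sq fun y => 𝔼 x, d x y, e,
          fun x => sum_sub_expect_sq (d x), sum_sub_distrib, ← mul_sum]
        rw [expect_comm univ univ d]
        ring

theorem sum_abs_doubleCenter_pow_three_le {t : ℝ} (ht0 : 0 < t) (ht1 : t < 1) (d : β → β → ℝ) :
    ∑ x, ∑ y, |doubleCenter d x y| ^ 3
      ≤ (∑ x, ∑ y, |d x y| ^ 3) / (1 - t) ^ 2
        + 9 * Fintype.card β / t ^ 2
          * (2 * ∑ x, |𝔼 y, d x y| ^ 3 + ∑ y, |𝔼 x, d x y| ^ 3) := by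
  let r x := 𝔼 y, d x y
  let s y := 𝔼 x, d x y
  let g := 𝔼 x, 𝔼 y, d x y
  have hcell (x y : β) : |doubleCenter d x y| ^ 3
      ≤ |d x y| ^ 3 / (1 - t) ^ 2 + 9 * (|r x| ^ 3 + |s y| ^ 3 + |g| ^ 3) / t ^ 2 := by
    have hmeans := abs_add_add_pow_three_le (-r x) (-s y) g
    rw [abs_neg, abs_neg] at hmeans
    calc |doubleCenter d x y| ^ 3 = |d x y + (-r x + -s y + g)| ^ 3 := by
          simp only [doubleCenter, r, s, g]; ring_nf
      _ ≤ |d x y| ^ 3 / (1 - t) ^ 2 + |-r x + -s y + g| ^ 3 / t ^ 2 :=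
          abs_add_pow_three_le ht0 ht1 _ _
      _ ≤ _ := by gcongr
  calc ∑ x, ∑ y, |doubleCenter d x y| ^ 3
      ≤ ∑ x, ∑ y, (|d x y| ^ 3 / (1 - t) ^ 2
          + 9 * (|r x| ^ 3 + |s y| ^ 3 + |g| ^ 3) / t ^ 2) :=
        sum_le_sum fun x _ => sum_le_sum fun y _ => hcell x y
    _ = (∑ x, ∑ y, |d x y| ^ 3) / (1 - t) ^ 2 + 9 * Fintype.card β / t ^ 2
          * (∑ x, |r x| ^ 3 + ∑ y, |s y| ^ 3 + Fintype.card β * |g| ^ 3) := by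
        simp only [sum_add_distrib, ← sum_div, ← mul_sum, sum_const, card_univ, nsmul_eq_mul]
        ring
    _ ≤ _ := by
        have hg : Fintype.card β * |g| ^ 3 ≤ ∑ x, |r x| ^ 3 := card_mul_abs_expect_pow_three_le r
        gcongr _ + _ * ?_
        linarith

theorem expect_permSum_sq [DecidableEq β] [Nontrivial β] (d : β → β → ℝ) :
    𝔼 π, permSum d π ^ 2 = (∑ x, ∑ y, doubleCenter d x y ^ 2) / (Fintype.card β - 1)
      + (Fintype.card β * 𝔼 x, 𝔼 y, d x y) ^ 2 := by
  have hc := isCentered_doubleCenter d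
  simp only [permSum_eq_permSum_doubleCenter_add d, add_sq, expect_add_distrib, ← expect_mul,
    ← mul_expect, hc.expect_permSum_eq_zero, hc.expect_permSum_sq, Fintype.expect_const]
  ring

theorem expect_permSum_sq_le [DecidableEq β] [Nontrivial β] (d : β → β → ℝ) :
    𝔼 π, permSum d π ^ 2
      ≤ (∑ x, ∑ y, d x y ^ 2) / (Fintype.card β - 1)
        + Fintype.card β * ∑ x, (𝔼 y, d x y) ^ 2 := by
  have hcard : (1 : ℝ) < Fintype.card β := by exact_mod_cast Fintype.one_lt_card
  have hmean : (Fintype.card β * 𝔼 x, 𝔼 y, d x y) ^ 2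
      ≤ Fintype.card β * ∑ x, (𝔼 y, d x y) ^ 2 := by
    have hjensen := sum_sub_expect_sq fun x => 𝔼 y, d x y
    rw [mul_pow, pow_two, mul_assoc]
    gcongr
    exact sub_nonneg.mp (hjensen ▸ sum_nonneg fun x _ => sq_nonneg _)
  have hcol : 0 ≤ Fintype.card β * ∑ y, (𝔼 x, d x y) ^ 2 := by positivity
  rw [expect_permSum_sq, sum_doubleCenter_sq]
  gcongr
  linarith

end DoubleCenter

/-! ### Minors of centered arrays -/

section Minor

variable {α : Type*} {c : α → α → ℝ} {A : Finset α}

/-- The array obtained from `c` by deleting the rows and the columns indexed by `A`. -/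
def minor (c : α → α → ℝ) (A : Finset α) (x y : {x // x ∉ A}) : ℝ := c x y

variable [Fintype α]

theorem IsCentered.flip (hc : IsCentered c) : IsCentered (flip c) := ⟨hc.col, hc.row⟩

variable [DecidableEq α]

theorem sum_subtype_notMem (A : Finset α) (f : α → ℝ) :
    ∑ y : {x // x ∉ A}, f y = ∑ y, f y - ∑ y ∈ A, f y := by
  rw [← Fintype.sum_subtype_add_sum_subtype (· ∈ A) f,
    ← sum_subtype A (fun _ => Iff.rfl) f, add_sub_cancel_left]

theorem sum_subtype_notMem_le (A : Finset α) {f : α → ℝ} (hf : ∀ x, 0 ≤ f x) :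
    ∑ y : {x // x ∉ A}, f y ≤ ∑ y, f y := by
  rw [sum_subtype_notMem]
  exact sub_le_self _ (sum_nonneg fun x _ => hf x)

theorem sum_sum_subtype_notMem_le (A : Finset α) {φ : α → α → ℝ} (hφ : ∀ x y, 0 ≤ φ x y) :
    ∑ x : {x // x ∉ A}, ∑ y : {x // x ∉ A}, φ x y ≤ ∑ x, ∑ y, φ x y :=
  (sum_le_sum fun (x : {x // x ∉ A}) _ => sum_subtype_notMem_le A (hφ x)).trans
    (sum_subtype_notMem_le A (f := fun x => ∑ y, φ x y) fun x => sum_nonneg fun y _ => hφ x y)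

theorem sub_le_sum_sum_subtype_notMem (A : Finset α) {φ : α → α → ℝ} (hφ : ∀ x y, 0 ≤ φ x y) :
    ∑ x, ∑ y, φ x y - (∑ p ∈ A, ∑ y, φ p y + ∑ q ∈ A, ∑ x, φ x q)
      ≤ ∑ x : {x // x ∉ A}, ∑ y : {x // x ∉ A}, φ x y := by
  have hsplit := sum_subtype_notMem A fun x => ∑ y : {x // x ∉ A}, φ x y
  have hA : 0 ≤ ∑ x ∈ A, ∑ y ∈ A, φ x y := sum_nonneg fun x _ => sum_nonneg fun y _ => hφ x y
  simp only [fun x => sum_subtype_notMem A (φ x), sum_sub_distrib] at hsplit ⊢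
  rw [hsplit, sum_comm (s := univ) (t := A)]
  linarith

namespace IsCentered

theorem expect_minor_row (hc : IsCentered c) (x : {x // x ∉ A}) :
    𝔼 y, minor c A x y = -(∑ q ∈ A, c x q) / Fintype.card {x // x ∉ A} := by
  simp only [Fintype.expect_eq_sum_div_card, minor]
  rw [sum_subtype_notMem A (c x), hc.row, zero_sub]

theorem card_mul_sum_expect_minor_sq_le (hc : IsCentered c) :
    Fintype.card {x // x ∉ A} * ∑ x, (𝔼 y, minor c A x y) ^ 2
      ≤ #A / Fintype.card {x // x ∉ A} * ∑ q ∈ A, ∑ x, c x q ^ 2 := by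
  have hrow : ∑ x : {x // x ∉ A}, (∑ q ∈ A, c x q) ^ 2 ≤ #A * ∑ q ∈ A, ∑ x, c x q ^ 2 :=
    calc ∑ x : {x // x ∉ A}, (∑ q ∈ A, c x q) ^ 2 ≤ ∑ x, (∑ q ∈ A, c x q) ^ 2 :=
          sum_subtype_notMem_le A fun x => sq_nonneg (∑ q ∈ A, c x q)
      _ ≤ ∑ x, #A * ∑ q ∈ A, c x q ^ 2 := sum_le_sum fun x _ => sq_sum_le_card_mul_sum_sq
      _ = #A * ∑ q ∈ A, ∑ x, c x q ^ 2 := by rw [← mul_sum, sum_comm]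
  rcases (Nat.cast_nonneg (α := ℝ) (Fintype.card {x // x ∉ A})).eq_or_lt with hm | hm
  · rw [← hm]; simp
  simp only [hc.expect_minor_row, div_pow, neg_sq, ← sum_div]
  rw [div_mul_eq_mul_div, le_div_iff₀ hm]
  refine le_of_eq_of_le ?_ hrow
  field_simp

theorem card_mul_sum_abs_expect_minor_pow_three_le (hc : IsCentered c) :
    Fintype.card {x // x ∉ A} * ∑ x, |𝔼 y, minor c A x y| ^ 3
      ≤ (#A / Fintype.card {x // x ∉ A}) ^ 2 * ∑ x, ∑ y, |c x y| ^ 3 := by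
  have hrow : ∑ x : {x // x ∉ A}, |∑ q ∈ A, c x q| ^ 3 ≤ (#A : ℝ) ^ 2 * ∑ x, ∑ y, |c x y| ^ 3 :=
    calc ∑ x : {x // x ∉ A}, |∑ q ∈ A, c x q| ^ 3 ≤ ∑ x, |∑ q ∈ A, c x q| ^ 3 :=
          sum_subtype_notMem_le A fun x => pow_nonneg (abs_nonneg (∑ q ∈ A, c x q)) 3
      _ ≤ ∑ x, (#A : ℝ) ^ 2 * ∑ q ∈ A, |c x q| ^ 3 :=
          sum_le_sum fun x _ => abs_sum_pow_three_le A (c x)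
      _ ≤ ∑ x, (#A : ℝ) ^ 2 * ∑ y, |c x y| ^ 3 := by
          gcongr with x
          exact subset_univ A
      _ = (#A : ℝ) ^ 2 * ∑ x, ∑ y, |c x y| ^ 3 := (mul_sum ..).symm
  rcases (Nat.cast_nonneg (α := ℝ) (Fintype.card {x // x ∉ A})).eq_or_lt with hm | hm
  · rw [← hm]; simp
  simp only [hc.expect_minor_row, abs_div, abs_neg, div_pow, abs_of_pos hm, ← sum_div]
  rw [div_mul_eq_mul_div, le_div_iff₀ (pow_pos hm 2)]
  refine le_of_eq_of_le ?_ hrow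
  field_simp

theorem expect_permSum_minor_sq_le [Nontrivial {x // x ∉ A}] (hc : IsCentered c) :
    𝔼 π, permSum (minor c A) π ^ 2
      ≤ (∑ x, ∑ y, c x y ^ 2) / (Fintype.card {x // x ∉ A} - 1)
        + #A / Fintype.card {x // x ∉ A} * ∑ q ∈ A, ∑ x, c x q ^ 2 := by
  have hm : (1 : ℝ) < Fintype.card {x // x ∉ A} := by exact_mod_cast Fintype.one_lt_card
  have hsq : ∑ x, ∑ y, minor c A x y ^ 2 ≤ ∑ x, ∑ y, c x y ^ 2 :=
    sum_sum_subtype_notMem_le A fun x y => sq_nonneg (c x y)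
  refine (expect_permSum_sq_le (minor c A)).trans (add_le_add ?_ ?_)
  · have : 0 ≤ (Fintype.card {x // x ∉ A} : ℝ) - 1 := by linarith
    gcongr
  · exact hc.card_mul_sum_expect_minor_sq_le

theorem le_sum_doubleCenter_minor_sq (hc : IsCentered c) :
    ∑ x, ∑ y, c x y ^ 2
        - (1 + #A / Fintype.card {x // x ∉ A})
          * (∑ p ∈ A, ∑ y, c p y ^ 2 + ∑ q ∈ A, ∑ x, c x q ^ 2)
      ≤ ∑ x, ∑ y, doubleCenter (minor c A) x y ^ 2 := by
  have hminor : ∑ x, ∑ y, c x y ^ 2 - (∑ p ∈ A, ∑ y, c p y ^ 2 + ∑ q ∈ A, ∑ x, c x q ^ 2)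
      ≤ ∑ x, ∑ y, minor c A x y ^ 2 :=
    sub_le_sum_sum_subtype_notMem A fun x y => sq_nonneg (c x y)
  have hrow := hc.card_mul_sum_expect_minor_sq_le (A := A)
  have hcol : Fintype.card {x // x ∉ A} * ∑ y, (𝔼 x, minor c A x y) ^ 2
      ≤ #A / Fintype.card {x // x ∉ A} * ∑ p ∈ A, ∑ y, c p y ^ 2 :=
    hc.flip.card_mul_sum_expect_minor_sq_le
  rw [sum_doubleCenter_sq]
  linarith [sq_nonneg (Fintype.card {x // x ∉ A} * 𝔼 x, 𝔼 y, minor c A x y)]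

theorem sum_abs_doubleCenter_minor_pow_three_le (hc : IsCentered c) {t : ℝ} (ht0 : 0 < t)
    (ht1 : t < 1) :
    ∑ x, ∑ y, |doubleCenter (minor c A) x y| ^ 3
      ≤ (1 / (1 - t) ^ 2 + 27 * (#A / (t * Fintype.card {x // x ∉ A})) ^ 2)
        * ∑ x, ∑ y, |c x y| ^ 3 := by
  have hminor : ∑ x, ∑ y, |minor c A x y| ^ 3 ≤ ∑ x, ∑ y, |c x y| ^ 3 :=
    sum_sum_subtype_notMem_le A fun x y => pow_nonneg (abs_nonneg (c x y)) 3
  have hrow := hc.card_mul_sum_abs_expect_minor_pow_three_le (A := A)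
  have hcol : Fintype.card {x // x ∉ A} * ∑ y, |𝔼 x, minor c A x y| ^ 3
      ≤ (#A / Fintype.card {x // x ∉ A}) ^ 2 * ∑ x, ∑ y, |c x y| ^ 3 := by
    rw [sum_comm (f := fun x y => |c x y| ^ 3)]
    exact hc.flip.card_mul_sum_abs_expect_minor_pow_three_le
  calc ∑ x, ∑ y, |doubleCenter (minor c A) x y| ^ 3
      ≤ (∑ x, ∑ y, |minor c A x y| ^ 3) / (1 - t) ^ 2
        + 9 * Fintype.card {x // x ∉ A} / t ^ 2
          * (2 * ∑ x, |𝔼 y, minor c A x y| ^ 3 + ∑ y, |𝔼 x, minor c A x y| ^ 3) :=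
        sum_abs_doubleCenter_pow_three_le ht0 ht1 _
    _ = (∑ x, ∑ y, |minor c A x y| ^ 3) / (1 - t) ^ 2
        + 9 / t ^ 2 * (2 * (Fintype.card {x // x ∉ A} * ∑ x, |𝔼 y, minor c A x y| ^ 3)
          + Fintype.card {x // x ∉ A} * ∑ y, |𝔼 x, minor c A x y| ^ 3) := by ring
    _ ≤ (∑ x, ∑ y, |c x y| ^ 3) / (1 - t) ^ 2
        + 9 / t ^ 2 * (2 * ((#A / Fintype.card {x // x ∉ A}) ^ 2 * ∑ x, ∑ y, |c x y| ^ 3)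
          + (#A / Fintype.card {x // x ∉ A}) ^ 2 * ∑ x, ∑ y, |c x y| ^ 3) := by gcongr
    _ = _ := by rw [mul_comm t, ← div_div, div_pow _ t]; ring

end IsCentered

end Minor

/-! ### Standardized arrays and the induction hypothesis -/

/-- A centered array normalized so that `permSum c` has unit variance. -/
structure IsStandardized {α : Type*} [Fintype α] (c : α → α → ℝ) : Prop extends IsCentered c where
  sum_sq : ∑ i, ∑ j, c i j ^ 2 = Fintype.card α - 1

/-- The ratio `n⁻¹ ∑ |c i j| ^ 3` of an `n × n` array, the scale of the error in the normal
approximation of `permSum c`. -/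
noncomputable def lyapunovRatio {α : Type*} [Fintype α] (c : α → α → ℝ) : ℝ :=
  (∑ i, ∑ j, |c i j| ^ 3) / Fintype.card α

/-- The Berry–Esseen bound for the permutation statistics of all standardized arrays on `α`. -/
def HasBerryEsseenBound (α : Type*) [Fintype α] [DecidableEq α] : Prop :=
  ∀ c : α → α → ℝ, IsStandardized c → ∀ z,
    |uniformCDF (permSum c) z - stdNormalCDF z| ≤ 451 * lyapunovRatio c

section Standardized

variable {α : Type*} [Fintype α] {c : α → α → ℝ}

theorem sum_sum_comp_perm (φ : α → α → ℝ) (π : Perm α) :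
    ∑ x, ∑ y, φ x (π y) = ∑ x, ∑ y, φ x y :=
  sum_congr rfl fun x _ => Equiv.sum_comp π (φ x)

theorem lyapunovRatio_comp_perm (c : α → α → ℝ) (π : Perm α) :
    lyapunovRatio (fun x y => c x (π y)) = lyapunovRatio c := by
  rw [lyapunovRatio, sum_sum_comp_perm fun x y => |c x y| ^ 3, lyapunovRatio]

theorem lyapunovRatio_nonneg (c : α → α → ℝ) : 0 ≤ lyapunovRatio c := by
  rw [lyapunovRatio]; positivity

theorem IsStandardized.comp_perm (hc : IsStandardized c) (π : Perm α) :
    IsStandardized fun x y => c x (π y) where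
  row x := (Equiv.sum_comp π (c x)).trans (hc.row x)
  col y := hc.col (π y)
  sum_sq := (sum_sum_comp_perm (fun x y => c x y ^ 2) π).trans hc.sum_sq

theorem sq_le_abs_pow_three {t : ℝ} (ht : 0 < t) (x : ℝ) :
    x ^ 2 ≤ 2 / (3 * t) * |x| ^ 3 + t ^ 2 / 3 := by
  have hfactor : 0 ≤ (|x| - t) ^ 2 * (2 * |x| + t) / (3 * t) := by positivity
  have hexpand : (|x| - t) ^ 2 * (2 * |x| + t) / (3 * t)
      = 2 / (3 * t) * |x| ^ 3 + t ^ 2 / 3 - |x| ^ 2 := by field_simp; ring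
  rw [hexpand, sq_abs] at hfactor
  exact sub_nonneg.mp hfactor

theorem sum_rows_sq_le {t : ℝ} (ht : 0 < t) (c : α → α → ℝ) (s : Finset α) :
    ∑ x ∈ s, ∑ y, c x y ^ 2
      ≤ Fintype.card α * (2 / (3 * t) * lyapunovRatio c + #s * t ^ 2 / 3) := by
  rcases isEmpty_or_nonempty α with _ | _
  · simp
  calc ∑ x ∈ s, ∑ y, c x y ^ 2
      ≤ ∑ x ∈ s, ∑ y : α, (2 / (3 * t) * |c x y| ^ 3 + t ^ 2 / 3) := by
        gcongr; exact sq_le_abs_pow_three ht _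
    _ = 2 / (3 * t) * ∑ x ∈ s, ∑ y, |c x y| ^ 3 + Fintype.card α * (#s * t ^ 2 / 3) := by
        simp only [sum_add_distrib, ← mul_sum, sum_const, card_univ, nsmul_eq_mul]
        ring
    _ ≤ 2 / (3 * t) * ∑ x, ∑ y, |c x y| ^ 3 + Fintype.card α * (#s * t ^ 2 / 3) := by
        gcongr; exact subset_univ s
    _ = _ := by rw [lyapunovRatio]; field_simp

theorem IsStandardized.card_ge [Nontrivial α] (hc : IsStandardized c)
    (hL : lyapunovRatio c ≤ 1 / 451) : (20000 : ℝ) ≤ Fintype.card α := by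
  have hcard : (2 : ℝ) ≤ Fintype.card α := by exact_mod_cast Fintype.one_lt_card
  have hsq := sum_rows_sq_le (t := 1 / 100) (by norm_num) c univ
  rw [hc.sum_sq, card_univ] at hsq
  by_contra! hlt
  nlinarith

theorem IsStandardized.lyapunovRatio_pos [Nontrivial α] (hc : IsStandardized c) :
    0 < lyapunovRatio c := by
  have hcard : (2 : ℝ) ≤ Fintype.card α := by exact_mod_cast Fintype.one_lt_card
  refine (lyapunovRatio_nonneg c).lt_of_ne fun hzero => ?_
  have hsq := sum_rows_sq_le (t := 1 / Fintype.card α) (by positivity) c univ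
  rw [hc.sum_sq, ← hzero, mul_zero, zero_add, card_univ] at hsq
  have : Fintype.card α * (Fintype.card α * (1 / (Fintype.card α : ℝ)) ^ 2 / 3) = 1 / 3 := by
    field_simp
  linarith

theorem HasBerryEsseenBound.abs_uniformCDF_sub_le [DecidableEq α] (h : HasBerryEsseenBound α)
    {a : α → α → ℝ} {σ : ℝ} (hσ : 0 < σ)
    (hvar : ∑ x, ∑ y, doubleCenter a x y ^ 2 = (Fintype.card α - 1) * σ ^ 2) (z : ℝ) :
    |uniformCDF (permSum a) z
        - stdNormalCDF ((z - Fintype.card α * 𝔼 x, 𝔼 y, a x y) / σ)|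
      ≤ 451 * lyapunovRatio (doubleCenter a) / σ ^ 3 := by
  have hcenter := isCentered_doubleCenter a
  have hstd : IsStandardized fun x y => doubleCenter a x y / σ :=
    ⟨⟨fun x => by rw [← sum_div, hcenter.row, zero_div],
      fun y => by rw [← sum_div, hcenter.col, zero_div]⟩,
      by simp only [div_pow, ← sum_div, hvar, mul_div_cancel_right₀ _ (pow_ne_zero 2 hσ.ne')]⟩
  have hsum : permSum a = fun π => σ * permSum (fun x y => doubleCenter a x y / σ) π
      + Fintype.card α * 𝔼 x, 𝔼 y, a x y := by
    ext π
    rw [permSum_eq_permSum_doubleCenter_add a π]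
    simp only [permSum, ← sum_div, mul_div_cancel₀ _ hσ.ne']
  rw [hsum, uniformCDF_mul_add hσ]
  refine (h _ hstd _).trans_eq ?_
  simp only [lyapunovRatio, abs_div, abs_of_pos hσ, div_pow, ← sum_div]
  ring

end Standardized

section StandardizedMinor

variable {α : Type*} [Fintype α] {c : α → α → ℝ} {A : Finset α}

theorem IsStandardized.nontrivial_minor [Nontrivial α] (hc : IsStandardized c)
    (hL : lyapunovRatio c ≤ 1 / 451) (hA : #A ≤ 4) : Nontrivial {x // x ∉ A} := by
  classical
  have hn : 20000 ≤ Fintype.card α := by exact_mod_cast hc.card_ge hL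
  rw [← Fintype.one_lt_card_iff_nontrivial, Fintype.card_subtype_compl, Fintype.card_coe]
  lia

theorem IsStandardized.flip (hc : IsStandardized c) : IsStandardized (flip c) where
  toIsCentered := hc.toIsCentered.flip
  sum_sq := sum_comm.trans hc.sum_sq

theorem lyapunovRatio_flip (c : α → α → ℝ) : lyapunovRatio (flip c) = lyapunovRatio c := by
  rw [lyapunovRatio, sum_comm]; rfl

theorem sum_rows_sq_le_of_card_le (hL : lyapunovRatio c ≤ 1 / 451) (hA : #A ≤ 4) :
    ∑ x ∈ A, ∑ y, c x y ^ 2 ≤ 0.03 * Fintype.card α := by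
  have hA' : (#A : ℝ) ≤ 4 := by exact_mod_cast hA
  refine (sum_rows_sq_le (t := 1 / 10) (by norm_num) c A).trans ?_
  rw [mul_comm]
  gcongr
  linarith

theorem sum_cols_sq_le_of_card_le (hL : lyapunovRatio c ≤ 1 / 451) (hA : #A ≤ 4) :
    ∑ y ∈ A, ∑ x, c x y ^ 2 ≤ 0.03 * Fintype.card α :=
  sum_rows_sq_le_of_card_le ((lyapunovRatio_flip c).trans_le hL) hA

variable [DecidableEq α]

namespace IsStandardized

variable [Nontrivial α]

theorem card_minor_ge (hc : IsStandardized c) (hL : lyapunovRatio c ≤ 1 / 451) (hA : #A ≤ 4) :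
    19996 ≤ (Fintype.card {x // x ∉ A} : ℝ) ∧
      Fintype.card α ≤ (Fintype.card {x // x ∉ A} : ℝ) + 4 := by
  have hA' : (#A : ℝ) ≤ 4 := by exact_mod_cast hA
  have hn := hc.card_ge hL
  have hm : (Fintype.card {x // x ∉ A} : ℝ) = Fintype.card α - #A := by
    rw [Fintype.card_subtype_compl, Fintype.card_coe, Nat.cast_sub (card_le_univ A)]
  constructor <;> linarith

theorem expect_abs_permSum_minor_le (hc : IsStandardized c) (hL : lyapunovRatio c ≤ 1 / 451)
    (hA : #A ≤ 4) : 2 * 𝔼 π, |permSum (minor c A) π| ≤ 2.13 := by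
  have := hc.nontrivial_minor hL hA
  obtain ⟨hm, hn⟩ := hc.card_minor_ge hL hA
  have hA' : (#A : ℝ) ≤ 4 := by exact_mod_cast hA
  have hcols := sum_cols_sq_le_of_card_le hL hA
  set m := (Fintype.card {x // x ∉ A} : ℝ)
  set n := (Fintype.card α : ℝ)
  calc 2 * 𝔼 π, |permSum (minor c A) π|
      = 𝔼 π, 2 * |permSum (minor c A) π| := mul_expect ..
    _ ≤ 𝔼 π, (1 + permSum (minor c A) π ^ 2) := by
        refine expect_le_expect fun π _ => ?_
        rw [← sq_abs (permSum _ _)]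
        linarith [two_mul_le_add_sq 1 |permSum (minor c A) π|]
    _ = 1 + 𝔼 π, permSum (minor c A) π ^ 2 := by
        rw [expect_add_distrib, expect_const univ_nonempty]
    _ ≤ 1 + ((n - 1) / (m - 1) + 4 / m * (0.03 * n)) := by
        have hvar := hc.expect_permSum_minor_sq_le (A := A)
        rw [hc.sum_sq] at hvar
        refine add_le_add le_rfl (hvar.trans (add_le_add le_rfl ?_))
        gcongr
    _ ≤ 1 + (1.001 + 0.129) := by
        gcongr
        · rw [div_le_iff₀ (by linarith)]; linarith
        · rw [div_mul_eq_mul_div, div_le_iff₀ (by linarith)]; linarith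
    _ = 2.13 := by norm_num

theorem le_sum_doubleCenter_minor_sq_of_card_le (hc : IsStandardized c)
    (hL : lyapunovRatio c ≤ 1 / 451) (hA : #A ≤ 4) :
    0.96 ^ 2 * ((Fintype.card {x // x ∉ A} : ℝ) - 1)
      ≤ ∑ x, ∑ y, doubleCenter (minor c A) x y ^ 2 := by
  obtain ⟨hm, -⟩ := hc.card_minor_ge hL hA
  have hA' : (#A : ℝ) ≤ 4 := by exact_mod_cast hA
  have hmn : (Fintype.card {x // x ∉ A} : ℝ) ≤ Fintype.card α := by
    exact_mod_cast Fintype.card_subtype_le _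
  have hdeleted : (1 + #A / (Fintype.card {x // x ∉ A} : ℝ))
        * (∑ p ∈ A, ∑ y, c p y ^ 2 + ∑ q ∈ A, ∑ x, c x q ^ 2)
      ≤ 1.001 * (0.03 * Fintype.card α + 0.03 * Fintype.card α) := by
    have hratio : #A / (Fintype.card {x // x ∉ A} : ℝ) ≤ 0.001 := by
      rw [div_le_iff₀ (by linarith)]; linarith
    gcongr
    · linarith
    · exact sum_rows_sq_le_of_card_le hL hA
    · exact sum_cols_sq_le_of_card_le hL hA
  have hvar := hc.le_sum_doubleCenter_minor_sq (A := A)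
  rw [hc.sum_sq] at hvar
  linarith

theorem lyapunovRatio_doubleCenter_minor_le (hc : IsStandardized c)
    (hL : lyapunovRatio c ≤ 1 / 451) (hA : #A ≤ 4) :
    lyapunovRatio (doubleCenter (minor c A)) ≤ 1.24 * lyapunovRatio c := by
  obtain ⟨hm, hn⟩ := hc.card_minor_ge hL hA
  have hA' : (#A : ℝ) ≤ 4 := by exact_mod_cast hA
  have hratio : #A / (1 / 10 * (Fintype.card {x // x ∉ A} : ℝ)) ≤ 0.0021 := by
    rw [div_le_iff₀ (by linarith)]; linarith
  have hn0 : (0 : ℝ) < Fintype.card α := by exact_mod_cast Fintype.card_pos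
  have hβ : ∑ x, ∑ y, |c x y| ^ 3 = lyapunovRatio c * Fintype.card α := by
    rw [lyapunovRatio, div_mul_cancel₀ _ hn0.ne']
  rw [lyapunovRatio, div_le_iff₀ (by linarith)]
  calc ∑ x, ∑ y, |doubleCenter (minor c A) x y| ^ 3
      ≤ (1 / (1 - 1 / 10) ^ 2 + 27 * (#A / (1 / 10 * (Fintype.card {x // x ∉ A} : ℝ))) ^ 2)
          * ∑ x, ∑ y, |c x y| ^ 3 :=
        hc.sum_abs_doubleCenter_minor_pow_three_le (by norm_num) (by norm_num)
    _ ≤ (1 / (1 - 1 / 10) ^ 2 + 27 * 0.0021 ^ 2) * ∑ x, ∑ y, |c x y| ^ 3 := by gcongr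
    _ = (1 / (1 - 1 / 10) ^ 2 + 27 * 0.0021 ^ 2) * Fintype.card α * lyapunovRatio c := by
        rw [hβ]; ring
    _ ≤ 1.24 * Fintype.card {x // x ∉ A} * lyapunovRatio c := by
        have := lyapunovRatio_nonneg c
        gcongr ?_ * _
        linarith
    _ = _ := by ring

theorem isSpread_permSum_minor (hc : IsStandardized c) (hL : lyapunovRatio c ≤ 1 / 451)
    (hA : #A ≤ 4) (hBE : HasBerryEsseenBound {x // x ∉ A}) :
    IsSpread (permSum (minor c A)) 0.42 (1270 * lyapunovRatio c) := by
  have hm : 0 < (Fintype.card {x // x ∉ A} : ℝ) - 1 := by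
    linarith [(hc.card_minor_ge hL hA).1]
  have hL0 := lyapunovRatio_nonneg c
  have hLm := hc.lyapunovRatio_doubleCenter_minor_le hL hA
  set σ := √((∑ x, ∑ y, doubleCenter (minor c A) x y ^ 2) / (Fintype.card {x // x ∉ A} - 1))
  have hσ : 0.96 ≤ σ := by
    refine Real.le_sqrt_of_sq_le ?_
    rw [le_div_iff₀ hm]
    exact hc.le_sum_doubleCenter_minor_sq_of_card_le hL hA
  have hvar : ∑ x, ∑ y, doubleCenter (minor c A) x y ^ 2
      = (Fintype.card {x // x ∉ A} - 1) * σ ^ 2 := by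
    rw [Real.sq_sqrt (by positivity), mul_div_cancel₀ _ hm.ne']
  have hσ0 : 0 < σ := by linarith
  refine (isSpread_of_abs_uniformCDF_sub_le hσ0 (hBE.abs_uniformCDF_sub_le hσ0 hvar)).mono ?_ ?_
  · calc 2 / 5 / σ ≤ 2 / 5 / 0.96 := by gcongr
      _ ≤ 0.42 := by norm_num
  · calc 2 * (451 * lyapunovRatio (doubleCenter (minor c A)) / σ ^ 3)
        ≤ 2 * (451 * (1.24 * lyapunovRatio c) / 0.96 ^ 3) := by gcongr
      _ = 2 * 451 * 1.24 / 0.96 ^ 3 * lyapunovRatio c := by ring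
      _ ≤ 1270 * lyapunovRatio c := by gcongr; norm_num

end IsStandardized

end StandardizedMinor

/-! ### The Stein discrepancy of a permutation statistic -/

theorem sq_mul_le_pow_three (u t : ℝ) (ht : 0 ≤ t) : u ^ 2 * t ≤ (2 * |u| ^ 3 + t ^ 3) / 3 := by
  have hfactor : 0 ≤ (|u| - t) ^ 2 * (2 * |u| + t) := by positivity
  rw [← sq_abs u]
  linarith

theorem expect_offDiag_add {α : Type*} [Fintype α] [Nontrivial α] (r : α → ℝ) :
    𝔼 x ∈ univ.offDiag, (r x.1 + r x.2) = 2 * 𝔼 x, r x := by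
  have hcard : (1 : ℝ) < Fintype.card α := by exact_mod_cast Fintype.one_lt_card
  rw [expect_eq_sum_div_card, sum_offDiag_univ fun x y => r x + r y, card_offDiag_univ,
    Fintype.expect_eq_sum_div_card]
  simp only [sum_add_distrib, sum_const, card_univ, nsmul_eq_mul, ← mul_sum]
  field_simp [show (Fintype.card α : ℝ) - 1 ≠ 0 by linarith]
  ring

section SteinDiscrepancy

variable {α : Type*} [DecidableEq α] {A : Finset α}

theorem sum_insert_le_of_nonneg (a : α) (s : Finset α) {g : α → ℝ} (hg : ∀ x, 0 ≤ g x) :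
    ∑ x ∈ insert a s, g x ≤ g a + ∑ x ∈ s, g x := by
  by_cases h : a ∈ s
  · rw [insert_eq_of_mem h]
    exact le_add_of_nonneg_left (hg a)
  · rw [sum_insert h]

theorem sum_quadruple_le (i j p q : α) {g : α → ℝ} (hg : ∀ x, 0 ≤ g x) :
    ∑ x ∈ {i, j, p, q}, g x ≤ g i + g j + g p + g q := by
  linarith [sum_insert_le_of_nonneg i {j, p, q} hg, sum_insert_le_of_nonneg j {p, q} hg,
    sum_insert_le_of_nonneg p {q} hg, sum_singleton g q]

theorem swapDiff_mul_ofSubtype {i j : α} (hi : i ∈ A) (hj : j ∈ A) (c : α → α → ℝ) (π : Perm α)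
    (ρ : Perm {x // x ∉ A}) : swapDiff c i j (π * Perm.ofSubtype ρ) = swapDiff c i j π := by
  simp only [swapDiff, Perm.mul_apply,
    Perm.ofSubtype_apply_of_not_mem ρ (not_not.mpr hi),
    Perm.ofSubtype_apply_of_not_mem ρ (not_not.mpr hj)]

variable [Fintype α] {c : α → α → ℝ} {f : ℝ → ℝ} {K : ℝ}

theorem permSum_mul_ofSubtype_mul (c : α → α → ℝ) (π : Perm α) (ρ : Perm {x // x ∉ A})
    {τ : Perm α} (hτ : ∀ x ∉ A, τ x = x) :
    permSum c (π * Perm.ofSubtype ρ * τ)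
      = permSum (minor (fun x y => c x (π y)) A) ρ + ∑ x ∈ A, c x (π (τ x)) := by
  have hτA (x : α) (hx : x ∈ A) : τ x ∈ A := by
    by_contra h
    exact h (by rwa [τ.injective (hτ _ h)])
  rw [permSum, permSum, ← sub_eq_iff_eq_add]
  have hfixed : ∑ x ∈ A, c x ((π * Perm.ofSubtype ρ * τ) x) = ∑ x ∈ A, c x (π (τ x)) :=
    sum_congr rfl fun x hx => by
      rw [Perm.mul_apply, Perm.mul_apply, Perm.ofSubtype_apply_of_not_mem]
      simpa using hτA x hx
  rw [← hfixed, ← sum_subtype_notMem A fun x => c x ((π * Perm.ofSubtype ρ * τ) x)]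
  refine sum_congr rfl fun x _ => ?_
  rw [Perm.mul_apply, Perm.mul_apply, hτ x x.2, Perm.ofSubtype_apply_coe, minor]

theorem permSum_mul_ofSubtype (c : α → α → ℝ) (π : Perm α) (ρ : Perm {x // x ∉ A}) :
    permSum c (π * Perm.ofSubtype ρ)
      = permSum (minor (fun x y => c x (π y)) A) ρ + ∑ x ∈ A, c x (π x) := by
  simpa using permSum_mul_ofSubtype_mul c π ρ (τ := 1) fun _ _ => rfl

theorem abs_expect_ofSubtype_le {i j : α} (hi : i ∈ A) (hj : j ∈ A) {π τ : Perm α}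
    (hτ : ∀ x ∉ A, τ x = x) (hf : Differentiable ℝ f)
    (hK : ∀ a, |𝔼 ρ, deriv f (permSum (minor (fun x y => c x (π y)) A) ρ + a)
      - 𝔼 ρ, deriv f (permSum (minor (fun x y => c x (π y)) A) ρ)| ≤ |a| * K) :
    |𝔼 ρ : Perm {x // x ∉ A}, (swapDiff c i j π ^ 2
          * deriv f (permSum c (π * Perm.ofSubtype ρ * τ))
        - swapDiff c i j π * (f (permSum c (π * Perm.ofSubtype ρ))
          - f (permSum c (π * Perm.ofSubtype ρ) - swapDiff c i j π)))|
      ≤ K * (swapDiff c i j π ^ 2 * |∑ x ∈ A, c x (π (τ x))|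
        + (swapDiff c i j π ^ 2 * |∑ x ∈ A, c x (π x)|
          + swapDiff c i j π ^ 2 * |∑ x ∈ A, c x (π (swap i j x))|) / 2) := by
  set S := permSum (minor (fun x y => c x (π y)) A)
  set D := swapDiff c i j π
  have hswap : ∑ x ∈ A, c x (π x) - D = ∑ x ∈ A, c x (π (swap i j x)) := by
    have hfix (x : α) (hx : x ∉ A) : swap i j x = x :=
      swap_apply_of_ne_of_ne (ne_of_mem_of_not_mem hi hx).symm (ne_of_mem_of_not_mem hj hx).symm
    have h := permSum_mul_swap c i j (π * Perm.ofSubtype (1 : Perm {x // x ∉ A}))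
    rw [permSum_mul_ofSubtype_mul c π 1 hfix, permSum_mul_ofSubtype,
      swapDiff_mul_ofSubtype hi hj] at h
    linarith
  have hincrement := abs_mul_deriv_sub_increment_le (K := K) (hasDerivAt_expect_comp_add hf S)
    (by simpa using hK) (∑ x ∈ A, c x (π (τ x))) (∑ x ∈ A, c x (π x)) D
  simp only [permSum_mul_ofSubtype_mul c π _ hτ, permSum_mul_ofSubtype, expect_sub_distrib,
    ← mul_expect, ← hswap, add_sub_assoc]
  rw [pow_two, mul_assoc, ← mul_sub, abs_mul, ← abs_mul_abs_self D]
  refine (mul_le_mul_of_nonneg_left hincrement (abs_nonneg D)).trans_eq ?_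
  ring

theorem expect_swapDiff_sq_mul_abs_le (c : α → α → ℝ) (i j x y : α) :
    𝔼 π, swapDiff c i j π ^ 2 * |c x (π y)|
      ≤ 16 / 3 * (𝔼 k, |c i k| ^ 3 + 𝔼 k, |c j k| ^ 3 + 𝔼 k, |c x k| ^ 3) := by
  have hpointwise (π : Perm α) : swapDiff c i j π ^ 2 * |c x (π y)|
      ≤ 8 / 3 * (|c i (π i)| ^ 3 + |c j (π j)| ^ 3 + |c i (π j)| ^ 3 + |c j (π i)| ^ 3)
        + 16 / 3 * |c x (π y)| ^ 3 := by
    have hsq : swapDiff c i j π ^ 2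
        ≤ 4 * (c i (π i) ^ 2 + c j (π j) ^ 2 + c i (π j) ^ 2 + c j (π i) ^ 2) := by
      simpa [Fin.sum_univ_four, swapDiff, sub_eq_add_neg] using sq_sum_le_card_mul_sum_sq
        (s := univ) (f := ![c i (π i), c j (π j), -c i (π j), -c j (π i)])
    have hcube (u : ℝ) := sq_mul_le_pow_three u _ (abs_nonneg (c x (π y)))
    have := mul_le_mul_of_nonneg_right hsq (abs_nonneg (c x (π y)))
    linarith [hcube (c i (π i)), hcube (c j (π j)), hcube (c i (π j)), hcube (c j (π i))]
  refine (expect_le_expect fun π _ => hpointwise π).trans_eq ?_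
  have hrow (z w : α) : 𝔼 π : Perm α, |c z (π w)| ^ 3 = 𝔼 k, |c z k| ^ 3 :=
    expect_perm_apply w fun k => |c z k| ^ 3
  simp only [expect_add_distrib, ← mul_expect, hrow]
  ring

theorem expect_swapDiff_sq_mul_abs_sum_le (c : α → α → ℝ) (i j p q : α) (τ : Perm α) :
    𝔼 π, swapDiff c i j π ^ 2 * |∑ x ∈ {i, j, p, q}, c x (π (τ x))|
      ≤ 16 / 3 * (5 * (𝔼 k, |c i k| ^ 3 + 𝔼 k, |c j k| ^ 3)
        + (𝔼 k, |c p k| ^ 3 + 𝔼 k, |c q k| ^ 3)) := by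
  have hnonneg (x : α) : 0 ≤ 𝔼 k, |c x k| ^ 3 := expect_nonneg fun k _ => by positivity
  calc 𝔼 π, swapDiff c i j π ^ 2 * |∑ x ∈ {i, j, p, q}, c x (π (τ x))|
      ≤ 𝔼 π, ∑ x ∈ {i, j, p, q}, swapDiff c i j π ^ 2 * |c x (π (τ x))| := by
        refine expect_le_expect fun π _ => ?_
        rw [← mul_sum]
        gcongr
        exact abs_sum_le_sum_abs ..
    _ = ∑ x ∈ {i, j, p, q}, 𝔼 π, swapDiff c i j π ^ 2 * |c x (π (τ x))| := expect_sum_comm ..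
    _ ≤ ∑ x ∈ {i, j, p, q},
          16 / 3 * (𝔼 k, |c i k| ^ 3 + 𝔼 k, |c j k| ^ 3 + 𝔼 k, |c x k| ^ 3) :=
        sum_le_sum fun x _ => expect_swapDiff_sq_mul_abs_le c i j x (τ x)
    _ ≤ _ := by
        refine (sum_quadruple_le i j p q fun x => ?_).trans_eq (by ring)
        linarith [hnonneg i, hnonneg j, hnonneg x]

theorem abs_expect_pairPerm_le (c : α → α → ℝ) (i j p q : α) (hf : Differentiable ℝ f) (hK0 : 0 ≤ K)
    (hK : ∀ (π : Perm α) a,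
      |𝔼 ρ, deriv f (permSum (minor (fun x y => c x (π y)) {i, j, p, q}) ρ + a)
        - 𝔼 ρ, deriv f (permSum (minor (fun x y => c x (π y)) {i, j, p, q}) ρ)| ≤ |a| * K) :
    |𝔼 π, (swapDiff c i j π ^ 2 * deriv f (permSum c (π * pairPerm i j p q))
        - swapDiff c i j π * (f (permSum c π) - f (permSum c π - swapDiff c i j π)))|
      ≤ 32 / 3 * K * (5 * (𝔼 k, |c i k| ^ 3 + 𝔼 k, |c j k| ^ 3)
        + (𝔼 k, |c p k| ^ 3 + 𝔼 k, |c q k| ^ 3)) := by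
  have hi : i ∈ ({i, j, p, q} : Finset α) := by simp
  have hj : j ∈ ({i, j, p, q} : Finset α) := by simp
  have hfix (x : α) (hx : x ∉ ({i, j, p, q} : Finset α)) : pairPerm i j p q x = x := by
    simp only [mem_insert, mem_singleton, not_or] at hx
    exact pairPerm_apply_of_ne hx.1 hx.2.1 hx.2.2.1 hx.2.2.2
  have hdeleted := expect_swapDiff_sq_mul_abs_sum_le c i j p q
  have hid := hdeleted 1
  simp only [Perm.one_apply] at hid
  rw [← expect_expect_comp_mul_right _ 
    (Perm.ofSubtype : Perm {x // x ∉ ({i, j, p, q} : Finset α)} → Perm α)]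
  simp only [swapDiff_mul_ofSubtype hi hj]
  refine (abs_expect_le ..).trans ((expect_le_expect fun π _ =>
    abs_expect_ofSubtype_le hi hj hfix hf (hK π)).trans ?_)
  simp only [← mul_expect, expect_add_distrib, ← expect_div]
  refine (mul_le_mul_of_nonneg_left (add_le_add (hdeleted (pairPerm i j p q))
    (div_le_div_of_nonneg_right (add_le_add hid (hdeleted (swap i j))) zero_le_two))
    hK0).trans_eq ?_
  ring

theorem expect_offDiag_expect_swapDiff_mul_increment [Nontrivial α] (hc : IsCentered c)
    (f : ℝ → ℝ) :
    𝔼 x ∈ univ.offDiag, 𝔼 π, swapDiff c x.1 x.2 π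
        * (f (permSum c π) - f (permSum c π - swapDiff c x.1 x.2 π))
      = 4 / (Fintype.card α - 1) * 𝔼 π, permSum c π * f (permSum c π) := by
  have hdiag (i : α) (π : Perm α) : swapDiff c i i π = 0 := by simp [swapDiff]
  rw [expect_eq_sum_div_card, sum_offDiag_univ fun i j => 𝔼 π, swapDiff c i j π
    * (f (permSum c π) - f (permSum c π - swapDiff c i j π)), ← stein_identity hc,
    card_offDiag_univ]
  simp only [hdiag, zero_mul, expect_const_zero, sum_const_zero, sub_zero]
  have hcard : (0 : ℝ) < Fintype.card α := by exact_mod_cast Fintype.card_pos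
  rw [mul_assoc, mul_left_comm, mul_div_mul_left _ _ hcard.ne', div_mul_eq_mul_div]

theorem IsStandardized.expect_offDiag_expect_swapDiff_sq [Nontrivial α] (hc : IsStandardized c) :
    𝔼 x ∈ univ.offDiag, 𝔼 π, swapDiff c x.1 x.2 π ^ 2 = 4 / ((Fintype.card α : ℝ) - 1) := by
  have hcard : (1 : ℝ) < Fintype.card α := by exact_mod_cast Fintype.one_lt_card
  have h := expect_offDiag_expect_swapDiff_mul_increment hc.toIsCentered id
  simp only [id, sub_sub_cancel, ← pow_two, hc.expect_permSum_sq, hc.sum_sq] at h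
  rw [h, div_self (by linarith), mul_one]

theorem IsStandardized.expect_offDiag_pairPerm_sub [Nontrivial α] (hc : IsStandardized c)
    (f g : ℝ → ℝ) :
    𝔼 x ∈ univ.offDiag, 𝔼 y ∈ univ.offDiag, 𝔼 π,
        (swapDiff c x.1 x.2 π ^ 2 * g (permSum c (π * pairPerm x.1 x.2 y.1 y.2))
          - swapDiff c x.1 x.2 π * (f (permSum c π) - f (permSum c π - swapDiff c x.1 x.2 π)))
      = 4 / (Fintype.card α - 1)
        * (𝔼 π, g (permSum c π) - 𝔼 π, permSum c π * f (permSum c π)) := by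
  have hne : (univ : Finset α).offDiag.Nonempty := by
    obtain ⟨i, j, hij⟩ := exists_pair_ne α
    exact ⟨(i, j), by simpa using hij⟩
  have hindep : ∀ x ∈ (univ : Finset α).offDiag, 𝔼 y ∈ univ.offDiag, 𝔼 π,
      swapDiff c x.1 x.2 π ^ 2 * g (permSum c (π * pairPerm x.1 x.2 y.1 y.2))
        = (𝔼 π, swapDiff c x.1 x.2 π ^ 2) * 𝔼 π, g (permSum c π) := fun x hx => by
    have hx' := (mem_offDiag.mp hx).2.2
    let φ (k l : α) := (c x.1 k + c x.2 l - c x.1 l - c x.2 k) ^ 2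
    exact (expect_offDiag_expect_pairPerm hx' φ fun π => g (permSum c π)).trans
      (congrArg (· * _) (expect_perm_apply_pair hx' φ).symm)
  simp only [expect_sub_distrib]
  rw [expect_congr rfl hindep, ← expect_mul, hc.expect_offDiag_expect_swapDiff_sq, mul_sub,
    ← expect_offDiag_expect_swapDiff_mul_increment hc.toIsCentered f]
  simp only [expect_const hne]

theorem IsStandardized.abs_expect_deriv_sub_expect_mul_le [Nontrivial α] (hc : IsStandardized c)
    (hf : Differentiable ℝ f) (hK0 : 0 ≤ K)
    (hK : ∀ A : Finset α, A.Nonempty → #A ≤ 4 → ∀ (π : Perm α) a,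
      |𝔼 ρ, deriv f (permSum (minor (fun x y => c x (π y)) A) ρ + a)
        - 𝔼 ρ, deriv f (permSum (minor (fun x y => c x (π y)) A) ρ)| ≤ |a| * K) :
    |𝔼 π, deriv f (permSum c π) - 𝔼 π, permSum c π * f (permSum c π)|
      ≤ 32 * K * lyapunovRatio c := by
  have hcard : (1 : ℝ) < Fintype.card α := by exact_mod_cast Fintype.one_lt_card
  have hcell (x y : α × α) := abs_expect_pairPerm_le c x.1 x.2 y.1 y.2 hf hK0
    (hK _ ⟨x.1, by simp⟩ card_le_four)
  have hne : (univ : Finset α).offDiag.Nonempty := by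
    obtain ⟨i, j, hij⟩ := exists_pair_ne α
    exact ⟨(i, j), by simpa using hij⟩
  have haverage : 4 / ((Fintype.card α : ℝ) - 1)
        * |𝔼 π, deriv f (permSum c π) - 𝔼 π, permSum c π * f (permSum c π)|
      ≤ 128 * K * 𝔼 i, 𝔼 k, |c i k| ^ 3 := by
    rw [← abs_of_pos (show 0 < 4 / ((Fintype.card α : ℝ) - 1) from
      div_pos four_pos (sub_pos.mpr hcard)), ← abs_mul, ← hc.expect_offDiag_pairPerm_sub]
    refine (abs_expect_le ..).trans ((expect_le_expect fun x _ => (abs_expect_le ..).trans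
      (expect_le_expect fun y _ => hcell x y)).trans_eq ?_)
    simp only [← mul_expect, expect_add_distrib, expect_const hne]
    rw [← expect_add_distrib, expect_offDiag_add fun i => 𝔼 k, |c i k| ^ 3]
    ring
  have hlyapunov : 𝔼 i, 𝔼 k, |c i k| ^ 3 = lyapunovRatio c / Fintype.card α := by
    simp only [Fintype.expect_eq_sum_div_card, ← sum_div, lyapunovRatio]
  rw [hlyapunov, div_mul_eq_mul_div, div_le_iff₀ (sub_pos.mpr hcard)] at haverage
  have hratio : lyapunovRatio c / Fintype.card α * ((Fintype.card α : ℝ) - 1)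
      ≤ lyapunovRatio c := by
    rw [div_mul_eq_mul_div, div_le_iff₀ (by linarith)]
    linarith [lyapunovRatio_nonneg c]
  linarith [mul_le_mul_of_nonneg_left hratio hK0]

end SteinDiscrepancy

/-! ### The induction on the size of the array -/

section BerryEsseen

universe u

variable {α : Type u} [Fintype α] [DecidableEq α] {c : α → α → ℝ} {A : Finset α}

theorem sqrt_pi_div_two_le : √(Real.pi / 2) ≤ 1.26 :=
  Real.sqrt_le_iff.mpr ⟨by norm_num, by linarith [Real.pi_lt_d2]⟩

theorem IsStandardized.abs_expect_ramp_minor_sub_le [Nontrivial α] (hc : IsStandardized c)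
    (hL : lyapunovRatio c ≤ 1 / 451) (hA : #A ≤ 4) (hBE : HasBerryEsseenBound {x // x ∉ A})
    (z a : ℝ) :
    |𝔼 ρ, ramp z (400 * lyapunovRatio c) (permSum (minor c A) ρ + a)
        - 𝔼 ρ, ramp z (400 * lyapunovRatio c) (permSum (minor c A) ρ)|
      ≤ |a| * 3.6 := by
  have hpos := hc.lyapunovRatio_pos
  have hramp := abs_expect_ramp_sub_le (hc.isSpread_permSum_minor hL hA hBE)
    (l := 400 * lyapunovRatio c) (by positivity) z a 0
  simp only [add_zero, sub_zero] at hramp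
  refine hramp.trans (mul_le_mul_of_nonneg_left ?_ (abs_nonneg a))
  rw [mul_div_mul_right _ _ hpos.ne']
  norm_num

theorem IsStandardized.abs_expect_ramp_sub_integral_le [Nontrivial α] (hc : IsStandardized c)
    (hL : lyapunovRatio c ≤ 1 / 451)
    (hBE : ∀ A : Finset α, A.Nonempty → Nontrivial {x // x ∉ A} →
      HasBerryEsseenBound {x // x ∉ A}) (z : ℝ) :
    |𝔼 π, ramp z (400 * lyapunovRatio c) (permSum c π)
        - ∫ x, ramp z (400 * lyapunovRatio c) x ∂gaussianReal 0 1|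
      ≤ 224 * lyapunovRatio c := by
  set h := ramp z (400 * lyapunovRatio c)
  have hcont : Continuous h := continuous_ramp z _
  have hbdd (x : ℝ) : |h x - ∫ y, h y ∂gaussianReal 0 1| ≤ 1 := abs_ramp_sub_integral_le_one ..
  have hderiv := hasDerivAt_steinSolution hcont hbdd
  have hf : Differentiable ℝ (steinSolution h) := fun w => (hderiv w).differentiableAt
  have hstein (w : ℝ) := (hderiv w).deriv
  have hdiscrepancy := hc.abs_expect_deriv_sub_expect_mul_le (K := 7) hf (by norm_num)
    fun A hA hA4 σ a => by
      have hcσ := hc.comp_perm σ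
      have hLσ := lyapunovRatio_comp_perm c σ
      have hramp := hcσ.abs_expect_ramp_minor_sub_le (hLσ.trans_le hL) hA4
        (hBE A hA (hc.nontrivial_minor hL hA4)) z a
      rw [hLσ] at hramp
      refine (abs_expect_deriv_sub_le _ hf hstein (abs_steinSolution_le hcont.measurable hbdd)
        (abs_deriv_steinSolution_le hcont hbdd) hramp).trans ?_
      gcongr
      linarith [sqrt_pi_div_two_le, hcσ.expect_abs_permSum_minor_le (hLσ.trans_le hL) hA4]
  simp only [hstein, expect_add_distrib, add_sub_cancel_left, expect_sub_distrib,
    expect_const univ_nonempty] at hdiscrepancy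
  linarith

theorem IsStandardized.abs_uniformCDF_sub_le [Nontrivial α] (hc : IsStandardized c)
    (hBE : ∀ A : Finset α, A.Nonempty → Nontrivial {x // x ∉ A} →
      HasBerryEsseenBound {x // x ∉ A}) (z : ℝ) :
    |uniformCDF (permSum c) z - stdNormalCDF z| ≤ 451 * lyapunovRatio c := by
  rcases le_or_gt (lyapunovRatio c) (1 / 451) with hL | hL
  · have hpos := hc.lyapunovRatio_pos
    have hsmoothing := abs_uniformCDF_sub_stdNormalCDF_le (by positivity)
      (hc.abs_expect_ramp_sub_integral_le hL hBE) z
    -- smoothing at scale `400 * lyapunovRatio c`: `224 + 2 / 5 * 400 = 384 ≤ 451`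
    linarith
  · have htrivial : |uniformCDF (permSum c) z - stdNormalCDF z| ≤ 1 - 0 :=
      abs_sub_le_of_le_of_le (uniformCDF_nonneg _ z) (uniformCDF_le_one _ z)
        (stdNormalCDF_nonneg z) (stdNormalCDF_le_one z)
    linarith

theorem hasBerryEsseenBound (α : Type u) [Fintype α] [DecidableEq α] [Nontrivial α] :
    HasBerryEsseenBound α := by
  induction hn : Fintype.card α using Nat.strong_induction_on generalizing α with
  | h n ih =>
    subst hn
    exact fun c hc => hc.abs_uniformCDF_sub_le fun A ⟨x, hx⟩ _ =>
      ih _ (Fintype.card_subtype_lt (not_not.mpr hx)) _ rfl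

end BerryEsseen

end CombinatorialCLT

open CombinatorialCLT BigOperators in
theorem combinatorial_clt_deterministic_general {α : Type*} [Fintype α] [DecidableEq α]
    [Nontrivial α] (a : α → α → ℝ) {σ : ℝ} (hσ : 0 < σ)
    (hvar : ∑ x, ∑ y, doubleCenter a x y ^ 2 = (Fintype.card α - 1) * σ ^ 2) (z : ℝ) :
    |uniformCDF (permSum a) z
        - stdNormalCDF ((z - Fintype.card α * 𝔼 x, 𝔼 y, a x y) / σ)|
      ≤ 451 * lyapunovRatio (doubleCenter a) / σ ^ 3 :=
  (hasBerryEsseenBound α).abs_uniformCDF_sub_le hσ hvar z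

/-- **Combinatorial CLT for deterministic arrays, third-moment bound.**
For a real `n × n` array (`n ≥ 2`) with vanishing row and column sums, normalized so that
`(1/(n-1)) ∑ c² = 1`, the distribution of `W = ∑ i, c i (π i)` under the uniform random
permutation `π` satisfies `sup_z |P(W ≤ z) - Φ(z)| ≤ (451/n) ∑ |c|³`. The probability
`P(W ≤ z)` is expressed by counting permutations. -/
theorem combinatorial_clt_deterministic
    (n : ℕ) (hn : 2 ≤ n) (c : Fin n → Fin n → ℝ)
    (hrow : ∀ i, ∑ j, c i j = 0)
    (hcol : ∀ j, ∑ i, c i j = 0)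
    (hnorm : (1 / ((n : ℝ) - 1)) * ∑ i, ∑ j, c i j ^ 2 = 1) :
    ∀ z : ℝ,
      |((Finset.univ.filter
            (fun σ : Equiv.Perm (Fin n) => ∑ i, c i (σ i) ≤ z)).card : ℝ)
          / (n.factorial : ℝ) - stdNormalCDF z|
        ≤ (451 / (n : ℝ)) * ∑ i, ∑ j, |c i j| ^ 3 := by
  intro z
  have : Nontrivial (Fin n) := Fin.nontrivial_iff_two_le.mpr hn
  have hc : CombinatorialCLT.IsCentered c := ⟨hrow, hcol⟩
  have hn1 : (n : ℝ) - 1 ≠ 0 := fun h => by simp [h] at hnorm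
  have hvar : ∑ i, ∑ j, CombinatorialCLT.doubleCenter c i j ^ 2
      = (Fintype.card (Fin n) - 1) * 1 ^ 2 := by
    rw [one_div_mul_eq_div, div_eq_one_iff_eq hn1] at hnorm
    rw [hc.doubleCenter_eq, hnorm, Fintype.card_fin, one_pow, mul_one]
  have hbound := combinatorial_clt_deterministic_general c one_pos hvar z
  rw [CombinatorialCLT.uniformCDF_eq_card_div_card, Fintype.card_perm, Fintype.card_fin,
    hc.doubleCenter_eq] at hbound
  simp only [hc.expect_row, Finset.expect_const_zero, mul_zero, sub_zero, div_one, one_pow]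
    at hbound
  exact hbound.trans_eq (by rw [CombinatorialCLT.lyapunovRatio, Fintype.card_fin]; ring)
end

section
/- Let {c_ij : 1 ≤ i,j ≤ n} be an n×n array of real numbers with n ≥ 2 such that all row sums and column sums vanish, (1/(n−1)) Σ_{i,j=1}^n c_ij² = 1, and |c_ij| ≤ C for all i,j and some constant C > 0. Let π be a uniformly random permutation of {1,…,n} and W = Σ_{i=1}^n c_{iπ(i)}. Then sup_{z∈ℝ} |P(W ≤ z) − Φ(z)| ≤ 451 C. -/
open MeasureTheory ProbabilityTheory
open scoped ENNReal

/-!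
Stein's method with zero biasing. Let `f` be the bounded solution of Stein's equation
`f' w - w * f w = 𝟙 (w < x) - Φ x`. If `W*` has the zero-biased law of `W`, characterized by
`𝔼 W f(W) = 𝔼 f'(W*)`, then `P(W* < x) - Φ x = 𝔼 (W f(W) - W* f(W*))`. Since `f` is bounded and
Lipschitz and `𝔼 |W| ≤ 1`, a coupling with `|W* - W| ≤ δ` makes this `O(δ)`, and shifting `x` by `δ`
passes from `W*` to `W`.

For the permutation sum such a coupling comes from the exchangeable pair `(σ, σ * swap i j)`, whose
difference is a cross difference of `c` in rows `i`, `j` and columns `σ i`, `σ j`. Choose rows `i`,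
`j` and columns `k`, `l` independently of `σ`, with probability proportional to the squared cross
difference, modify `σ` so that `i ↦ k` and `j ↦ l`, and let `W*` be uniform between the sums for the
modified permutation and for its composition with `swap i j`. Only four rows are affected, so
`δ = 8 * C`.
-/

open scoped BigOperators NNReal

section RightDerivative

open Set

variable {f f' : ℝ → ℝ}

lemma mul_sub_le_sub_of_le_right_deriv {a b m : ℝ} (hab : a ≤ b) (hf : ContinuousOn f (Icc a b))
    (hf' : ∀ w ∈ Ico a b, HasDerivWithinAt f (f' w) (Ici w) w) (hm : ∀ w ∈ Ico a b, m ≤ f' w) :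
    m * (b - a) ≤ f b - f a := by
  have hline (w : ℝ) : HasDerivAt (fun w => f a + m * (w - a)) m w := by
    simpa using (((hasDerivAt_id w).sub_const a).const_mul m).const_add (f a)
  have := image_le_of_deriv_right_le_deriv_boundary
    (fun w _ => (hline w).continuousAt.continuousWithinAt)
    (fun w _ => (hline w).hasDerivWithinAt) (by simp) hf hf' hm (right_mem_Icc.2 hab)
  linarith

lemma mul_mul_sub_le_mul_sub_of_le_right_deriv (hf : Continuous f)
    (hf' : ∀ w, HasDerivWithinAt f (f' w) (Ici w) w) {a b g m : ℝ} (hg : 0 ≤ g * (b - a))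
    (hm : ∀ w ∈ Ico (min a b) (max a b), m ≤ f' w) :
    m * (g * (b - a)) ≤ g * (f b - f a) := by
  rcases lt_trichotomy a b with hab | rfl | hba
  · rw [min_eq_left hab.le, max_eq_right hab.le] at hm
    have hincr := mul_sub_le_sub_of_le_right_deriv hab.le hf.continuousOn (fun w _ => hf' w) hm
    have hg0 : 0 ≤ g := nonneg_of_mul_nonneg_left hg (sub_pos.2 hab)
    linarith [mul_le_mul_of_nonneg_left hincr hg0]
  · simp
  · rw [min_eq_right hba.le, max_eq_left hba.le] at hm
    have hincr := mul_sub_le_sub_of_le_right_deriv hba.le hf.continuousOn (fun w _ => hf' w) hm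
    have hg0 : g ≤ 0 := nonpos_of_mul_nonneg_left hg (sub_neg.2 hba)
    linarith [mul_le_mul_of_nonpos_left hincr hg0]

lemma lipschitzWith_of_abs_right_deriv_le {K : ℝ≥0} (hf : Continuous f)
    (hf' : ∀ w, HasDerivWithinAt f (f' w) (Ici w) w) (hK : ∀ w, |f' w| ≤ K) :
    LipschitzWith K f := by
  refine LipschitzWith.of_dist_le_mul fun b a => ?_
  wlog hab : a ≤ b generalizing a b
  · simpa only [dist_comm] using this a b (le_of_not_ge hab)
  simpa only [Real.dist_eq, Real.norm_eq_abs, abs_of_nonneg (sub_nonneg.2 hab)] using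
    norm_image_sub_le_of_norm_deriv_right_le_segment hf.continuousOn (fun w _ => hf' w)
      (fun w _ => hK w) b (right_mem_Icc.2 hab)

end RightDerivative

section GaussianDensity

variable (μ : ℝ) (v : ℝ≥0) (x : ℝ)

lemma hasDerivAt_gaussianPDFReal :
    HasDerivAt (gaussianPDFReal μ v) (-(x - μ) / v * gaussianPDFReal μ v x) x := by
  have hsq : HasDerivAt (fun x => (x - μ) ^ 2) (2 * (x - μ)) x := by
    simpa using ((hasDerivAt_id x).sub_const μ).fun_pow 2
  rw [gaussianPDFReal_def]
  refine ((hsq.fun_neg.div_const (2 * (v : ℝ))).exp.const_mul (√(2 * Real.pi * v))⁻¹).congr_deriv ?_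
  rw [← mul_neg, mul_div_mul_left _ _ two_ne_zero]
  ring

lemma continuous_gaussianPDFReal : Continuous (gaussianPDFReal μ v) :=
  continuous_iff_continuousAt.2 fun x => (hasDerivAt_gaussianPDFReal μ v x).continuousAt

lemma gaussianPDFReal_neg_neg : gaussianPDFReal (-μ) v (-x) = gaussianPDFReal μ v x := by
  simp only [gaussianPDFReal]
  ring_nf

lemma gaussianPDFReal_le : gaussianPDFReal μ v x ≤ (√(2 * Real.pi * v))⁻¹ :=
  mul_le_of_le_one_right (by positivity) <| Real.exp_le_one_iff.2 <|
    div_nonpos_of_nonpos_of_nonneg (neg_nonpos.2 (sq_nonneg _)) (by positivity)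

end GaussianDensity

local notation "φ" => gaussianPDFReal 0 1
local notation "Φ" => stdNormalCDF

section StandardNormal

open Set Filter Topology

lemma gaussianPDFReal_std_pos (w : ℝ) : 0 < φ w := gaussianPDFReal_pos 0 1 w one_ne_zero

lemma gaussianPDFReal_std_neg (w : ℝ) : φ (-w) = φ w := by
  simpa using gaussianPDFReal_neg_neg 0 1 w

lemma hasDerivAt_gaussianPDFReal_std (w : ℝ) : HasDerivAt φ (-(w * φ w)) w := by
  simpa using hasDerivAt_gaussianPDFReal 0 1 w

lemma gaussianPDFReal_std_le_half (w : ℝ) : φ w ≤ 1 / 2 := by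
  refine (gaussianPDFReal_le 0 1 w).trans ?_
  rw [one_div]
  refine inv_anti₀ two_pos (Real.le_sqrt_of_sq_le ?_)
  norm_num
  linarith [Real.pi_gt_three]

lemma integrable_mul_gaussianPDFReal_std : Integrable fun t => t * φ t := by
  convert (integrable_mul_exp_neg_mul_sq (b := 1 / 2) (by norm_num)).const_mul
    (√(2 * Real.pi))⁻¹ using 2 with t
  simp only [gaussianPDFReal, NNReal.coe_one, mul_one, sub_zero]
  ring_nf

lemma integral_Ioi_mul_gaussianPDFReal_std (w : ℝ) : ∫ t in Ioi w, t * φ t = φ w := by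
  have hderiv : ∀ t, HasDerivAt φ (-(t * φ t)) t := hasDerivAt_gaussianPDFReal_std
  have hint : IntegrableOn (fun t => -(t * φ t)) (Ioi w) :=
    integrable_mul_gaussianPDFReal_std.neg.integrableOn
  have hlim : Tendsto φ atTop (𝓝 0) := tendsto_zero_of_hasDerivAt_of_integrableOn_Ioi
    (fun t _ => hderiv t) hint (integrable_gaussianPDFReal 0 1).integrableOn
  have := integral_Ioi_of_hasDerivAt_of_tendsto' (fun t _ => hderiv t) hint hlim
  rwa [integral_neg, zero_sub, neg_inj] at this

lemma stdNormalCDF_eq_integral (z : ℝ) : Φ z = ∫ t in Iic z, φ t := by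
  rw [stdNormalCDF, gaussianReal_apply_eq_integral _ one_ne_zero, ENNReal.toReal_ofReal]
  exact integral_nonneg fun t => gaussianPDFReal_nonneg 0 1 t

lemma one_sub_stdNormalCDF_eq_integral (z : ℝ) : 1 - Φ z = ∫ t in Ioi z, φ t := by
  have hint := integrable_gaussianPDFReal 0 1
  have htotal := intervalIntegral.integral_Iic_add_Ioi (b := z) hint.integrableOn hint.integrableOn
  rw [integral_gaussianPDFReal_eq_one 0 one_ne_zero] at htotal
  rw [stdNormalCDF_eq_integral, ← htotal, add_sub_cancel_left]

lemma stdNormalCDF_nonneg (z : ℝ) : 0 ≤ Φ z := ENNReal.toReal_nonneg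

lemma stdNormalCDF_neg (z : ℝ) : Φ (-z) = 1 - Φ z := by
  rw [one_sub_stdNormalCDF_eq_integral, stdNormalCDF_eq_integral, ← integral_comp_neg_Ioi]
  simp only [gaussianPDFReal_std_neg]

lemma stdNormalCDF_zero : Φ 0 = 1 / 2 := by
  have := stdNormalCDF_neg 0
  rw [neg_zero] at this
  linarith

lemma stdNormalCDF_le_one (z : ℝ) : Φ z ≤ 1 := by
  linarith [stdNormalCDF_nonneg (-z), stdNormalCDF_neg z]

lemma hasDerivAt_stdNormalCDF (z : ℝ) : HasDerivAt Φ (φ z) z := by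
  have hint := integrable_gaussianPDFReal 0 1
  have hcont := continuous_gaussianPDFReal 0 1
  have hΦ : Φ = fun w => Φ 0 + ∫ t in (0 : ℝ)..w, φ t := by
    funext w
    rw [← intervalIntegral.integral_Iic_sub_Iic hint.integrableOn hint.integrableOn,
      stdNormalCDF_eq_integral, stdNormalCDF_eq_integral, add_sub_cancel]
  rw [hΦ]
  exact (intervalIntegral.integral_hasDerivAt_right hint.intervalIntegrable
    (hcont.stronglyMeasurableAtFilter _ _) hcont.continuousAt).const_add _

lemma continuous_stdNormalCDF : Continuous Φ :=
  continuous_iff_continuousAt.2 fun z => (hasDerivAt_stdNormalCDF z).continuousAt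

lemma monotone_stdNormalCDF : Monotone Φ :=
  monotone_of_hasDerivAt_nonneg hasDerivAt_stdNormalCDF fun z => (gaussianPDFReal_std_pos z).le

lemma lipschitzWith_stdNormalCDF : LipschitzWith (1 / 2) Φ :=
  lipschitzWith_of_abs_right_deriv_le continuous_stdNormalCDF
    (fun z => (hasDerivAt_stdNormalCDF z).hasDerivWithinAt) fun z => by
      rw [abs_of_pos (gaussianPDFReal_std_pos z)]
      exact_mod_cast gaussianPDFReal_std_le_half z

end StandardNormal

section MillsRatio

open Set

/-- The Mills ratio of the standard normal distribution, its tail divided by its density. -/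
noncomputable def millsRatio (w : ℝ) : ℝ := (1 - Φ w) / φ w

lemma millsRatio_nonneg (w : ℝ) : 0 ≤ millsRatio w :=
  div_nonneg (sub_nonneg.2 (stdNormalCDF_le_one w)) (gaussianPDFReal_std_pos w).le

lemma hasDerivAt_millsRatio (w : ℝ) : HasDerivAt millsRatio (w * millsRatio w - 1) w := by
  have hφ := (gaussianPDFReal_std_pos w).ne'
  refine (((hasDerivAt_stdNormalCDF w).const_sub 1).fun_div
    (hasDerivAt_gaussianPDFReal_std w) hφ).congr_deriv ?_
  unfold millsRatio
  field_simp
  ring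

lemma mul_millsRatio_le_one (w : ℝ) : w * millsRatio w ≤ 1 := by
  rw [millsRatio, ← mul_div_assoc, div_le_one (gaussianPDFReal_std_pos w),
    one_sub_stdNormalCDF_eq_integral, ← integral_const_mul]
  calc ∫ t in Ioi w, w * φ t
      ≤ ∫ t in Ioi w, t * φ t :=
        setIntegral_mono_on ((integrable_gaussianPDFReal 0 1).const_mul w).integrableOn
          integrable_mul_gaussianPDFReal_std.integrableOn measurableSet_Ioi
          fun t ht => mul_le_mul_of_nonneg_right (le_of_lt ht) (gaussianPDFReal_std_pos t).le
    _ = φ w := integral_Ioi_mul_gaussianPDFReal_std w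

lemma antitone_millsRatio : Antitone millsRatio :=
  antitone_of_hasDerivAt_nonpos hasDerivAt_millsRatio fun w =>
    sub_nonpos.2 (mul_millsRatio_le_one w)

lemma millsRatio_zero_le : millsRatio 0 ≤ 3 / 2 := by
  have hsqrt : √(2 * Real.pi) ≤ 3 := Real.sqrt_le_iff.2 ⟨by norm_num, by linarith [Real.pi_lt_four]⟩
  calc millsRatio 0 = √(2 * Real.pi) / 2 := by
        simp only [millsRatio, stdNormalCDF_zero, gaussianPDFReal, NNReal.coe_one, mul_one,
          sub_self, ne_eq, OfNat.ofNat_ne_zero, not_false_eq_true, zero_pow, neg_zero, zero_div,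
          Real.exp_zero, div_inv_eq_mul]
        ring
    _ ≤ 3 / 2 := by gcongr

lemma stdNormalCDF_mul_millsRatio (w : ℝ) :
    Φ w * millsRatio w = Φ (-w) * millsRatio (-w) := by
  rw [millsRatio, millsRatio, gaussianPDFReal_std_neg, stdNormalCDF_neg]
  ring

lemma stdNormalCDF_mul_millsRatio_le (w : ℝ) : Φ w * millsRatio w ≤ 3 / 2 := by
  wlog hw : 0 ≤ w generalizing w
  · rw [stdNormalCDF_mul_millsRatio]
    exact this (-w) (neg_nonneg.2 (le_of_not_ge hw))
  exact (mul_le_of_le_one_left (millsRatio_nonneg w) (stdNormalCDF_le_one w)).trans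
    ((antitone_millsRatio hw).trans millsRatio_zero_le)

lemma stdNormalCDF_mul_one_sub_mul_millsRatio_le_one (w : ℝ) :
    Φ w * (1 - w * millsRatio w) ≤ 1 := by
  have hneg := mul_le_mul_of_nonneg_left (mul_millsRatio_le_one (-w)) (stdNormalCDF_nonneg (-w))
  have hsymm := stdNormalCDF_mul_millsRatio w
  calc Φ w * (1 - w * millsRatio w) = Φ w - w * (Φ w * millsRatio w) := by ring
    _ = Φ w + Φ (-w) * (-w * millsRatio (-w)) := by rw [hsymm]; ring
    _ ≤ Φ w + Φ (-w) * 1 := by gcongr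
    _ = 1 := by rw [stdNormalCDF_neg]; ring

end MillsRatio

section SteinSolution

open Set Filter Topology

/-- The bounded solution `f` of Stein's equation `f' w - w * f w = 𝟙 (w < x) - Φ x`; the minimum
and maximum merge its two branches `w ≤ x` and `x ≤ w`. -/
noncomputable def steinSolution (x w : ℝ) : ℝ := Φ (min w x) * (1 - Φ (max w x)) / φ w

/-- The right derivative of `steinSolution x`, which has a corner at `x`. -/
noncomputable def steinSolutionDeriv (x w : ℝ) : ℝ :=
  w * steinSolution x w + (if w < x then 1 else 0) - Φ x

variable {x w : ℝ}

lemma steinSolution_of_le (h : x ≤ w) : steinSolution x w = Φ x * millsRatio w := by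
  rw [steinSolution, millsRatio, min_eq_right h, max_eq_left h, mul_div_assoc]

lemma steinSolution_neg_neg (x w : ℝ) : steinSolution (-x) (-w) = steinSolution x w := by
  rw [steinSolution, steinSolution, min_neg_neg, max_neg_neg, stdNormalCDF_neg, stdNormalCDF_neg,
    gaussianPDFReal_std_neg, sub_sub_cancel, mul_comm]

lemma steinSolution_of_ge (h : w ≤ x) : steinSolution x w = Φ (-x) * millsRatio (-w) := by
  rw [← steinSolution_neg_neg, steinSolution_of_le (neg_le_neg h)]

lemma continuous_steinSolution (x : ℝ) : Continuous (steinSolution x) :=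
  ((continuous_stdNormalCDF.comp (continuous_id.min continuous_const)).mul
    (continuous_const.sub (continuous_stdNormalCDF.comp (continuous_id.max continuous_const)))).div
    (continuous_gaussianPDFReal 0 1) fun w => (gaussianPDFReal_std_pos w).ne'

lemma steinSolution_nonneg (x w : ℝ) : 0 ≤ steinSolution x w :=
  div_nonneg (mul_nonneg (stdNormalCDF_nonneg _) (sub_nonneg.2 (stdNormalCDF_le_one _)))
    (gaussianPDFReal_std_pos w).le

lemma steinSolution_le (x w : ℝ) : steinSolution x w ≤ 3 / 2 := by
  wlog h : x ≤ w generalizing x w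
  · rw [← steinSolution_neg_neg]
    exact this (-x) (-w) (neg_le_neg (le_of_not_ge h))
  rw [steinSolution_of_le h]
  exact (mul_le_mul_of_nonneg_right (monotone_stdNormalCDF h) (millsRatio_nonneg w)).trans
    (stdNormalCDF_mul_millsRatio_le w)

lemma steinSolutionDeriv_of_le (h : x ≤ w) :
    steinSolutionDeriv x w = Φ x * (w * millsRatio w - 1) := by
  rw [steinSolutionDeriv, steinSolution_of_le h, if_neg h.not_gt]
  ring

lemma steinSolutionDeriv_of_gt (h : w < x) :
    steinSolutionDeriv x w = -(Φ (-x) * (-w * millsRatio (-w) - 1)) := by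
  rw [steinSolutionDeriv, steinSolution_of_ge h.le, if_pos h, stdNormalCDF_neg]
  ring

lemma hasDerivWithinAt_steinSolution (x w : ℝ) :
    HasDerivWithinAt (steinSolution x) (steinSolutionDeriv x w) (Ici w) w := by
  rcases lt_or_ge w x with h | h
  · have hbranch : steinSolution x =ᶠ[𝓝 w] fun t => Φ (-x) * millsRatio (-t) := by
      filter_upwards [Iio_mem_nhds h] with t ht using steinSolution_of_ge (le_of_lt ht)
    refine HasDerivAt.hasDerivWithinAt (HasDerivAt.congr_of_eventuallyEq ?_ hbranch)
    rw [steinSolutionDeriv_of_gt h, ← mul_neg]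
    simpa using ((hasDerivAt_millsRatio (-w)).comp w (hasDerivAt_neg w)).const_mul (Φ (-x))
  · rw [steinSolutionDeriv_of_le h]
    exact ((hasDerivAt_millsRatio w).const_mul (Φ x)).hasDerivWithinAt.congr
      (fun t ht => steinSolution_of_le (h.trans ht)) (steinSolution_of_le h)

lemma abs_stdNormalCDF_mul_mul_millsRatio_sub_one_le (h : x ≤ w) :
    |Φ x * (w * millsRatio w - 1)| ≤ 1 := by
  have hdefect : 0 ≤ 1 - w * millsRatio w := sub_nonneg.2 (mul_millsRatio_le_one w)
  rw [abs_mul, abs_sub_comm, abs_of_nonneg (stdNormalCDF_nonneg x), abs_of_nonneg hdefect]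
  exact (mul_le_mul_of_nonneg_right (monotone_stdNormalCDF h) hdefect).trans
    (stdNormalCDF_mul_one_sub_mul_millsRatio_le_one w)

lemma abs_steinSolutionDeriv_le_one (x w : ℝ) : |steinSolutionDeriv x w| ≤ 1 := by
  rcases lt_or_ge w x with h | h
  · rw [steinSolutionDeriv_of_gt h, abs_neg]
    exact abs_stdNormalCDF_mul_mul_millsRatio_sub_one_le (neg_le_neg h.le)
  · rw [steinSolutionDeriv_of_le h]
    exact abs_stdNormalCDF_mul_mul_millsRatio_sub_one_le h

lemma lipschitzWith_steinSolution (x : ℝ) : LipschitzWith 1 (steinSolution x) :=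
  lipschitzWith_of_abs_right_deriv_le (continuous_steinSolution x)
    (hasDerivWithinAt_steinSolution x) (abs_steinSolutionDeriv_le_one x)

lemma abs_mul_steinSolution_sub_le (x : ℝ) {v w δ : ℝ} (h : |w - v| ≤ δ) :
    |w * steinSolution x w - v * steinSolution x v| ≤ (|v| + 3 / 2) * δ := by
  have hlip : |steinSolution x w - steinSolution x v| ≤ δ := by
    simpa [Real.dist_eq] using ((lipschitzWith_steinSolution x).dist_le_mul w v).trans
      (by simpa [Real.dist_eq] using h)
  calc |w * steinSolution x w - v * steinSolution x v|
      = |v * (steinSolution x w - steinSolution x v) + (w - v) * steinSolution x w| := by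
        congr 1; ring
    _ ≤ |v| * |steinSolution x w - steinSolution x v| + |w - v| * steinSolution x w := by
        refine (abs_add_le _ _).trans_eq ?_
        rw [abs_mul, abs_mul, abs_of_nonneg (steinSolution_nonneg x w)]
    _ ≤ |v| * δ + δ * (3 / 2) := by
        gcongr
        exacts [steinSolution_nonneg x w, (abs_nonneg _).trans h, steinSolution_le x w]
    _ = (|v| + 3 / 2) * δ := by ring

end SteinSolution

section ZeroBiasCoupling

open Finset

variable {Ω ι : Type*} [Fintype Ω] [Fintype ι]

/-- A coupling of `W`, on the finite probability space `Ω` with the uniform measure, with its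
zero-biased version `W*`, whose law is characterized by `𝔼 W f(W) = 𝔼 f'(W*)`: given `ω`, choose
`q` with probability `G q ω * (B q ω - A q ω) / a` and take `W*` uniform between `A q ω` and
`B q ω`. The random variable `W*` itself is integrated out, so that no derivative appears. -/
structure IsZeroBiasCoupling (W : Ω → ℝ) (A B G : ι → Ω → ℝ) (a : ℝ) : Prop where
  pos : 0 < a
  mul_sub_nonneg : ∀ q ω, 0 ≤ G q ω * (B q ω - A q ω)
  sum_mul_sub : ∀ ω, ∑ q, G q ω * (B q ω - A q ω) = a
  mul_expect_mul : ∀ f : ℝ → ℝ,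
    a * 𝔼 ω, W ω * f (W ω) = 𝔼 ω, ∑ q, G q ω * (f (B q ω) - f (A q ω))

namespace IsZeroBiasCoupling

variable {W : Ω → ℝ} {A B G : ι → Ω → ℝ} {a δ : ℝ}

lemma expect_le_expect_mul (h : IsZeroBiasCoupling W A B G a)
    (hA : ∀ q ω, |A q ω - W ω| ≤ δ) (hB : ∀ q ω, |B q ω - W ω| ≤ δ) {f f' : ℝ → ℝ}
    (hf : Continuous f) (hf' : ∀ w, HasDerivWithinAt f (f' w) (Set.Ici w) w) {m : Ω → ℝ}
    (hm : ∀ ω, ∀ w ∈ Set.Ico (W ω - δ) (W ω + δ), m ω ≤ f' w) :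
    𝔼 ω, m ω ≤ 𝔼 ω, W ω * f (W ω) := by
  refine le_of_mul_le_mul_left ?_ h.pos
  rw [h.mul_expect_mul, mul_expect]
  refine expect_le_expect fun ω _ => ?_
  rw [mul_comm, ← h.sum_mul_sub ω, mul_sum]
  refine sum_le_sum fun q _ => mul_mul_sub_le_mul_sub_of_le_right_deriv hf hf'
    (h.mul_sub_nonneg q ω) fun w hw => hm ω w (Set.Ico_subset_Ico ?_ ?_ hw)
  · exact le_min (by linarith [(abs_le.1 (hA q ω)).1]) (by linarith [(abs_le.1 (hB q ω)).1])
  · exact max_le (by linarith [(abs_le.1 (hA q ω)).2]) (by linarith [(abs_le.1 (hB q ω)).2])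

variable [Nonempty Ω]

lemma expect_sq (h : IsZeroBiasCoupling W A B G a) : 𝔼 ω, W ω ^ 2 = 1 := by
  refine mul_left_cancel₀ h.pos.ne' ?_
  simpa only [pow_two, h.sum_mul_sub, Fintype.expect_const, mul_one] using
    h.mul_expect_mul fun w => w

lemma expect_abs_le_one (h : IsZeroBiasCoupling W A B G a) : 𝔼 ω, |W ω| ≤ 1 := by
  have hamgm : 𝔼 ω, |W ω| ≤ 𝔼 ω, (W ω ^ 2 + 1) / 2 :=
    expect_le_expect fun ω _ => by nlinarith [sq_nonneg (|W ω| - 1), sq_abs (W ω)]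
  rw [← expect_div, expect_add_distrib, h.expect_sq, Fintype.expect_const] at hamgm
  linarith

lemma nonneg_of_abs_sub_le (h : IsZeroBiasCoupling W A B G a) (hA : ∀ q ω, |A q ω - W ω| ≤ δ) :
    0 ≤ δ := by
  obtain ⟨ω⟩ := ‹Nonempty Ω›
  obtain ⟨q, -, -⟩ := exists_ne_zero_of_sum_ne_zero ((h.sum_mul_sub ω).trans_ne h.pos.ne')
  exact (abs_nonneg _).trans (hA q ω)

lemma expect_abs_add_mul_le (h : IsZeroBiasCoupling W A B G a) (hδ : 0 ≤ δ) :
    𝔼 ω, (|W ω| + 3 / 2) * δ ≤ 5 / 2 * δ := by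
  rw [← expect_mul, expect_add_distrib, Fintype.expect_const]
  exact mul_le_mul_of_nonneg_right (by linarith [h.expect_abs_le_one]) hδ

lemma expect_le_stdNormalCDF_add (h : IsZeroBiasCoupling W A B G a)
    (hA : ∀ q ω, |A q ω - W ω| ≤ δ) (hB : ∀ q ω, |B q ω - W ω| ≤ δ) {p : Ω → ℝ} {x : ℝ}
    (hp : ∀ ω, ∀ w ∈ Set.Ico (W ω - δ) (W ω + δ), p ω ≤ if w < x then 1 else 0) :
    𝔼 ω, p ω ≤ Φ x + 5 / 2 * δ := by
  have hstein := h.expect_le_expect_mul hA hB (continuous_steinSolution x)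
    (hasDerivWithinAt_steinSolution x)
    (m := fun ω => W ω * steinSolution x (W ω) - (|W ω| + 3 / 2) * δ + p ω - Φ x)
    fun ω w hw => by
      have hclose : |w - W ω| ≤ δ := abs_le.2 ⟨by linarith [hw.1], by linarith [hw.2]⟩
      rw [steinSolutionDeriv]
      linarith [(abs_le.1 (abs_mul_steinSolution_sub_le x hclose)).1, hp ω w hw]
  rw [expect_sub_distrib, expect_add_distrib, expect_sub_distrib, Fintype.expect_const] at hstein
  linarith [h.expect_abs_add_mul_le (h.nonneg_of_abs_sub_le hA)]

lemma stdNormalCDF_sub_le_expect (h : IsZeroBiasCoupling W A B G a)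
    (hA : ∀ q ω, |A q ω - W ω| ≤ δ) (hB : ∀ q ω, |B q ω - W ω| ≤ δ) {p : Ω → ℝ} {x : ℝ}
    (hp : ∀ ω, ∀ w ∈ Set.Ico (W ω - δ) (W ω + δ), (if w < x then 1 else 0) ≤ p ω) :
    Φ x - 5 / 2 * δ ≤ 𝔼 ω, p ω := by
  have hstein := h.expect_le_expect_mul hA hB (continuous_steinSolution x).neg
    (fun w => (hasDerivWithinAt_steinSolution x w).neg)
    (m := fun ω => Φ x - p ω - (|W ω| + 3 / 2) * δ - W ω * steinSolution x (W ω))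
    fun ω w hw => by
      have hclose : |w - W ω| ≤ δ := abs_le.2 ⟨by linarith [hw.1], by linarith [hw.2]⟩
      rw [steinSolutionDeriv]
      linarith [(abs_le.1 (abs_mul_steinSolution_sub_le x hclose)).2, hp ω w hw]
  simp only [Pi.neg_apply, mul_neg, expect_sub_distrib, expect_neg_distrib,
    Fintype.expect_const] at hstein
  linarith [h.expect_abs_add_mul_le (h.nonneg_of_abs_sub_le hA)]

theorem abs_card_le_div_sub_stdNormalCDF_le (h : IsZeroBiasCoupling W A B G a)
    (hA : ∀ q ω, |A q ω - W ω| ≤ δ) (hB : ∀ q ω, |B q ω - W ω| ≤ δ) (z : ℝ) :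
    |(#{ω | W ω ≤ z} : ℝ) / Fintype.card Ω - Φ z| ≤ 3 * δ := by
  have hδ : 0 ≤ δ := h.nonneg_of_abs_sub_le hA
  have hprob : (#{ω | W ω ≤ z} : ℝ) / Fintype.card Ω = 𝔼 ω, if W ω ≤ z then 1 else 0 := by
    rw [Fintype.expect_eq_sum_div_card, sum_boole]
  have hupper := h.expect_le_stdNormalCDF_add hA hB (p := fun ω => if W ω ≤ z then 1 else 0)
    (x := z + δ) fun ω w hw => by have := hw.2; split_ifs <;> linarith
  have hlower := h.stdNormalCDF_sub_le_expect hA hB (p := fun ω => if W ω ≤ z then 1 else 0)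
    (x := z - δ) fun ω w hw => by have := hw.1; split_ifs <;> linarith
  have hright := lipschitzWith_stdNormalCDF.dist_le_mul (z + δ) z
  have hleft := lipschitzWith_stdNormalCDF.dist_le_mul (z - δ) z
  simp only [Real.dist_eq, add_sub_cancel_left, sub_sub_cancel_left, abs_neg, abs_of_nonneg hδ,
    NNReal.coe_div, NNReal.coe_one, NNReal.coe_ofNat] at hright hleft
  rw [hprob, abs_le]
  constructor <;> linarith [(abs_le.1 hright).2, (abs_le.1 hleft).1]

end IsZeroBiasCoupling

end ZeroBiasCoupling

section RandomPermutation

open Finset Equiv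

variable {α : Type*}

/-- The cross difference of the array `c` in rows `i`, `j` and columns `k`, `l`: the amount by which
the selected sum drops when a permutation matching `i ↦ k` and `j ↦ l` is composed with the
transposition of `i` and `j`. -/
def crossDiff (c : α → α → ℝ) (i j k l : α) : ℝ := c i k + c j l - c i l - c j k

lemma crossDiff_self_left (c : α → α → ℝ) (i k l : α) : crossDiff c i i k l = 0 := by
  rw [crossDiff]
  ring

lemma crossDiff_self_right (c : α → α → ℝ) (i j k : α) : crossDiff c i j k k = 0 := by
  rw [crossDiff]
  ring

lemma crossDiff_swap_right (c : α → α → ℝ) (i j k l : α) :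
    crossDiff c i j l k = -crossDiff c i j k l := by
  rw [crossDiff, crossDiff]
  ring

section PairPerm

variable [DecidableEq α]

/-- A permutation moving the pair `(m, p)` to `(k, l)` when `m ≠ p` and `k ≠ l`, and fixing all
other points. -/
def pairPerm (m p k l : α) : Perm α := swap l (swap k m p) * swap k m

variable {m p k l : α}

lemma pairPerm_apply_left (hmp : m ≠ p) (hkl : k ≠ l) : pairPerm m p k l m = k := by
  rw [pairPerm, Perm.mul_apply, swap_apply_right]
  refine swap_apply_of_ne_of_ne hkl fun h => hmp ?_
  rwa [eq_comm, swap_apply_eq_iff, swap_apply_left, eq_comm] at h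

lemma pairPerm_apply_right (m p k l : α) : pairPerm m p k l p = l := by
  rw [pairPerm, Perm.mul_apply, swap_apply_right]

lemma pairPerm_apply_of_ne {x : α} (hm : x ≠ m) (hp : x ≠ p) (hk : x ≠ k) (hl : x ≠ l) :
    pairPerm m p k l x = x := by
  have hfix : swap k m x = x := swap_apply_of_ne_of_ne hk hm
  rw [pairPerm, Perm.mul_apply, hfix]
  refine swap_apply_of_ne_of_ne hl fun h => hp ?_
  rwa [eq_comm, swap_apply_eq_iff, hfix, eq_comm] at h

/-- The permutation obtained from `σ` by moving the images of `i` and `j` to `k` and `l`. -/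
def matchPerm (i j k l : α) (σ : Perm α) : Perm α := pairPerm (σ i) (σ j) k l * σ

lemma matchPerm_apply_left {i j : α} (hij : i ≠ j) (hkl : k ≠ l) (σ : Perm α) :
    matchPerm i j k l σ i = k :=
  pairPerm_apply_left (σ.injective.ne hij) hkl

lemma matchPerm_apply_right (i j k l : α) (σ : Perm α) : matchPerm i j k l σ j = l :=
  pairPerm_apply_right _ _ _ _

lemma matchPerm_apply_of_notMem {i j x : α} {σ : Perm α}
    (hx : x ∉ ({i, j, σ⁻¹ k, σ⁻¹ l} : Finset α)) : matchPerm i j k l σ x = σ x := by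
  simp only [mem_insert, mem_singleton, not_or, Perm.eq_inv_iff_eq] at hx
  obtain ⟨hi, hj, hk, hl⟩ := hx
  exact pairPerm_apply_of_ne (σ.injective.ne hi) (σ.injective.ne hj) hk hl

lemma matchPerm_mul_swap_apply_of_notMem {i j x : α} {σ : Perm α}
    (hx : x ∉ ({i, j, σ⁻¹ k, σ⁻¹ l} : Finset α)) : (matchPerm i j k l σ * swap i j) x = σ x := by
  have hswap : swap i j x = x := swap_apply_of_ne_of_ne (by grind) (by grind)
  rw [Perm.mul_apply, hswap, matchPerm_apply_of_notMem hx]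

end PairPerm

section PermSum

variable [Fintype α]

/-- The sum of the entries of the array `c` selected by the permutation `σ`. -/
def permSum (c : α → α → ℝ) (σ : Perm α) : ℝ := ∑ i, c i (σ i)

variable {c : α → α → ℝ}

lemma sum_crossDiff_sq_columns (hrow : ∀ i, ∑ j, c i j = 0) (i j : α) :
    ∑ k, ∑ l, crossDiff c i j k l ^ 2 = 2 * Fintype.card α * ∑ k, (c i k - c j k) ^ 2 := by
  have hdiff : ∑ k, (c i k - c j k) = 0 := by rw [sum_sub_distrib, hrow, hrow, sub_zero]
  calc ∑ k, ∑ l, crossDiff c i j k l ^ 2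
      = ∑ k, ∑ l, ((c i k - c j k) ^ 2 + (c i l - c j l) ^ 2
          - 2 * (c i k - c j k) * (c i l - c j l)) := by
        refine sum_congr rfl fun k _ => sum_congr rfl fun l _ => ?_
        rw [crossDiff]
        ring
    _ = 2 * Fintype.card α * ∑ k, (c i k - c j k) ^ 2 := by
        simp only [sum_sub_distrib, sum_add_distrib, ← mul_sum, hdiff, mul_zero, sub_zero,
          sum_const, card_univ, nsmul_eq_mul]
        ring

lemma sum_sub_sq_of_sum_eq_zero (hcol : ∀ j, ∑ i, c i j = 0) :
    ∑ i, ∑ j, ∑ k, (c i k - c j k) ^ 2 = 2 * Fintype.card α * ∑ i, ∑ j, c i j ^ 2 := by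
  have hcross (i : α) : ∑ j, ∑ k, 2 * c i k * c j k = 0 := by
    rw [sum_comm]
    simp only [← mul_sum, hcol, mul_zero, sum_const_zero]
  simp only [sub_sq, sum_add_distrib, sum_sub_distrib, hcross, sub_zero, sum_const, card_univ,
    nsmul_eq_mul, ← mul_sum]
  ring

lemma sum_crossDiff_sq (hrow : ∀ i, ∑ j, c i j = 0) (hcol : ∀ j, ∑ i, c i j = 0) :
    ∑ i, ∑ j, ∑ k, ∑ l, crossDiff c i j k l ^ 2 =
      4 * (Fintype.card α : ℝ) ^ 2 * ∑ i, ∑ j, c i j ^ 2 := by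
  simp only [sum_crossDiff_sq_columns hrow, ← mul_sum, sum_sub_sq_of_sum_eq_zero hcol]
  ring

lemma sum_crossDiff_apply (hrow : ∀ i, ∑ j, c i j = 0) (σ : Perm α) :
    ∑ i, ∑ j, crossDiff c i j (σ i) (σ j) = 2 * Fintype.card α * permSum c σ := by
  have hrow_comp (i : α) : ∑ j, c i (σ j) = 0 := (Equiv.sum_comp σ (c i)).trans (hrow i)
  have hrow_swapped : ∑ i, ∑ j, c j (σ i) = 0 := by
    rw [sum_comm]
    exact sum_eq_zero fun j _ => hrow_comp j
  simp only [crossDiff, sum_sub_distrib, sum_add_distrib, hrow_comp, hrow_swapped, sum_const,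
    card_univ, nsmul_eq_mul, ← mul_sum, sub_zero]
  rw [permSum]
  ring

lemma abs_permSum_sub_le {C : ℝ} (hc : ∀ i j, |c i j| ≤ C) {σ τ : Perm α} {s : Finset α}
    (hs : ∀ x ∉ s, σ x = τ x) : |permSum c σ - permSum c τ| ≤ #s * (2 * C) := by
  have hsupp : permSum c σ - permSum c τ = ∑ x ∈ s, (c x (σ x) - c x (τ x)) := by
    rw [permSum, permSum, ← sum_sub_distrib]
    exact (sum_subset (subset_univ s) fun x _ hx => by rw [hs x hx, sub_self]).symm
  rw [hsupp, ← nsmul_eq_mul]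
  refine (abs_sum_le_sum_abs _ _).trans (sum_le_card_nsmul _ _ _ fun x _ => ?_)
  linarith [abs_sub (c x (σ x)) (c x (τ x)), hc x (σ x), hc x (τ x)]

variable [DecidableEq α]

lemma permSum_sub_permSum_mul_swap (c : α → α → ℝ) (σ : Perm α) (i j : α) :
    permSum c σ - permSum c (σ * swap i j) = crossDiff c i j (σ i) (σ j) := by
  rcases eq_or_ne i j with rfl | hij
  · rw [swap_self, ← Perm.one_def, mul_one, sub_self, crossDiff_self_left]
  · rw [permSum, permSum, ← sum_sub_distrib, Fintype.sum_eq_add i j hij]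
    · rw [Perm.mul_apply, Perm.mul_apply, swap_apply_left, swap_apply_right, crossDiff]
      ring
    · rintro m ⟨hi, hj⟩
      rw [Perm.mul_apply, swap_apply_of_ne_of_ne hi hj, sub_self]

lemma permSum_matchPerm_sub {i j k l : α} (hij : i ≠ j) (hkl : k ≠ l) (c : α → α → ℝ)
    (σ : Perm α) :
    permSum c (matchPerm i j k l σ) - permSum c (matchPerm i j k l σ * swap i j) =
      crossDiff c i j k l := by
  rw [permSum_sub_permSum_mul_swap, matchPerm_apply_left hij hkl, matchPerm_apply_right]

lemma crossDiff_mul_permSum_matchPerm_sub (c : α → α → ℝ) (i j k l : α) (σ : Perm α) :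
    crossDiff c i j k l *
        (permSum c (matchPerm i j k l σ) - permSum c (matchPerm i j k l σ * swap i j)) =
      crossDiff c i j k l ^ 2 := by
  rcases eq_or_ne i j with rfl | hij
  · simp [crossDiff_self_left]
  rcases eq_or_ne k l with rfl | hkl
  · simp [crossDiff_self_right]
  rw [permSum_matchPerm_sub hij hkl, sq]

lemma abs_permSum_sub_le_of_eq_off_four {C : ℝ} (hc : ∀ i j, |c i j| ≤ C) {σ τ : Perm α}
    {a b d e : α} (h : ∀ x ∉ ({a, b, d, e} : Finset α), τ x = σ x) :
    |permSum c τ - permSum c σ| ≤ 8 * C := by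
  have hcard : (#{a, b, d, e} : ℝ) ≤ 4 := by exact_mod_cast card_le_four
  have hC : 0 ≤ 2 * C := mul_nonneg two_pos.le ((abs_nonneg _).trans (hc a a))
  linarith [abs_permSum_sub_le hc h, mul_le_mul_of_nonneg_right hcard hC]

end PermSum

section ZeroBias

variable [Fintype α] [DecidableEq α]

-- Each of the `n (n - 1)` values of `(σ i, σ j)` contributes equally, because left multiplication
-- by `pairPerm` identifies its fibre with the fibre over `(k, l)`.
lemma sum_matchPerm {i j k l : α} (hij : i ≠ j) (hkl : k ≠ l) (F : Perm α → ℝ) :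
    ∑ σ, F (matchPerm i j k l σ) =
      Fintype.card α * (Fintype.card α - 1) * ∑ σ with (σ i, σ j) = (k, l), F σ := by
  have hfibre : ∀ q ∈ (univ : Finset α).offDiag,
      ∑ σ : Perm α with (σ i, σ j) = q, F (matchPerm i j k l σ) =
        ∑ σ with (σ i, σ j) = (k, l), F σ := by
    rintro ⟨m, p⟩ hmp
    have hleft : pairPerm m p k l m = k := pairPerm_apply_left (mem_offDiag.1 hmp).2.2 hkl
    have hright : pairPerm m p k l p = l := pairPerm_apply_right m p k l
    refine sum_equiv (Equiv.mulLeft (pairPerm m p k l)) (fun σ => ?_) fun σ hσ => ?_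
    · simp only [mem_filter_univ, Prod.mk.injEq, coe_mulLeft, Perm.mul_apply]
      rw [← (pairPerm m p k l).apply_eq_iff_eq, hleft,
        ← (pairPerm m p k l).apply_eq_iff_eq (x := σ j), hright]
    · obtain ⟨rfl, rfl⟩ := Prod.mk.inj ((mem_filter_univ σ).1 hσ)
      rfl
  have hcard : (#(univ : Finset α).offDiag : ℝ) = Fintype.card α * (Fintype.card α - 1) := by
    rw [offDiag_card, Nat.cast_sub (Nat.le_mul_self _), card_univ]
    push_cast
    ring
  rw [← sum_fiberwise_of_maps_to (t := univ.offDiag) (g := fun σ : Perm α => (σ i, σ j))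
    fun σ _ => mem_offDiag.2 ⟨mem_univ _, mem_univ _, σ.injective.ne hij⟩, sum_congr rfl hfibre,
    sum_const, nsmul_eq_mul, hcard]

lemma sum_apply_mul_eq_sum_matchPerm {D : α → α → ℝ} (hD : ∀ k, D k k = 0) {i j : α}
    (hij : i ≠ j) (F : Perm α → ℝ) :
    Fintype.card α * (Fintype.card α - 1) * ∑ σ : Perm α, D (σ i) (σ j) * F σ =
      ∑ k, ∑ l, ∑ σ, D k l * F (matchPerm i j k l σ) := by
  have hfibre : ∑ σ : Perm α, D (σ i) (σ j) * F σ =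
      ∑ k, ∑ l, D k l * ∑ σ : Perm α with (σ i, σ j) = (k, l), F σ := by
    rw [← sum_fiberwise univ fun σ : Perm α => (σ i, σ j), Fintype.sum_prod_type]
    refine sum_congr rfl fun k _ => sum_congr rfl fun l _ => ?_
    rw [mul_sum]
    refine sum_congr rfl fun σ hσ => ?_
    obtain ⟨rfl, rfl⟩ := Prod.mk.inj ((mem_filter_univ σ).1 hσ)
    rfl
  simp only [hfibre, mul_sum (a := Fintype.card α * (Fintype.card α - 1 : ℝ))]
  refine sum_congr rfl fun k _ => sum_congr rfl fun l _ => ?_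
  rcases eq_or_ne k l with rfl | hkl
  · simp only [hD, zero_mul, mul_zero, sum_const_zero]
  · rw [← mul_sum, sum_matchPerm hij hkl, mul_left_comm]

lemma sum_crossDiff_mul_sub_mul_swap (c : α → α → ℝ) (F : Perm α → ℝ) (i j : α) :
    ∑ σ : Perm α, crossDiff c i j (σ i) (σ j) * (F σ - F (σ * swap i j)) =
      2 * ∑ σ : Perm α, crossDiff c i j (σ i) (σ j) * F σ := by
  have hflip : ∑ σ : Perm α, crossDiff c i j (σ i) (σ j) * F (σ * swap i j) =
      -∑ σ : Perm α, crossDiff c i j (σ i) (σ j) * F σ := by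
    rw [← Equiv.sum_comp (Equiv.mulRight (swap i j)), ← sum_neg_distrib]
    refine sum_congr rfl fun σ _ => ?_
    rw [coe_mulRight, Perm.mul_apply, Perm.mul_apply, swap_apply_left, swap_apply_right,
      mul_swap_mul_self, crossDiff_swap_right, neg_mul]
  simp only [mul_sub, sum_sub_distrib]
  rw [hflip, two_mul, sub_neg_eq_add]

variable {c : α → α → ℝ}

lemma sum_permSum_mul (hrow : ∀ i, ∑ j, c i j = 0) (F : Perm α → ℝ) :
    4 * Fintype.card α * ∑ σ, permSum c σ * F σ =
      ∑ i, ∑ j, ∑ σ : Perm α, crossDiff c i j (σ i) (σ j) * (F σ - F (σ * swap i j)) := by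
  calc 4 * Fintype.card α * ∑ σ, permSum c σ * F σ
      = 2 * ∑ σ : Perm α, (∑ i, ∑ j, crossDiff c i j (σ i) (σ j)) * F σ := by
        simp only [sum_crossDiff_apply hrow, mul_assoc, ← mul_sum]
        ring
    _ = 2 * ∑ i, ∑ j, ∑ σ : Perm α, crossDiff c i j (σ i) (σ j) * F σ := by
        simp only [sum_mul]
        rw [sum_comm]
        simp only [sum_comm (s := (univ : Finset (Perm α)))]
    _ = _ := by simp only [sum_crossDiff_mul_sub_mul_swap, mul_sum]

lemma sum_permSum_mul_eq_sum_matchPerm (hrow : ∀ i, ∑ j, c i j = 0) (F : Perm α → ℝ) :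
    4 * (Fintype.card α : ℝ) ^ 2 * (Fintype.card α - 1) * ∑ σ, permSum c σ * F σ =
      ∑ i, ∑ j, ∑ k, ∑ l, ∑ σ, crossDiff c i j k l *
        (F (matchPerm i j k l σ) - F (matchPerm i j k l σ * swap i j)) := by
  have hpair (i j : α) : Fintype.card α * (Fintype.card α - 1) *
      ∑ σ : Perm α, crossDiff c i j (σ i) (σ j) * (F σ - F (σ * swap i j)) =
      ∑ k, ∑ l, ∑ σ, crossDiff c i j k l *
        (F (matchPerm i j k l σ) - F (matchPerm i j k l σ * swap i j)) := by
    rcases eq_or_ne i j with rfl | hij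
    · simp only [crossDiff_self_left, zero_mul, sum_const_zero, mul_zero]
    · exact sum_apply_mul_eq_sum_matchPerm (crossDiff_self_right c i j) hij
        fun σ => F σ - F (σ * swap i j)
  simp only [← hpair]
  simp only [← mul_sum]
  rw [← sum_permSum_mul hrow]
  ring

theorem isZeroBiasCoupling_permSum [Nontrivial α] (hrow : ∀ i, ∑ j, c i j = 0)
    (hcol : ∀ j, ∑ i, c i j = 0) (hnorm : ∑ i, ∑ j, c i j ^ 2 = Fintype.card α - 1) :
    IsZeroBiasCoupling (permSum c)
      (fun (i, j, k, l) σ => permSum c (matchPerm i j k l σ * swap i j))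
      (fun (i, j, k, l) σ => permSum c (matchPerm i j k l σ))
      (fun (i, j, k, l) _ => crossDiff c i j k l)
      (4 * (Fintype.card α : ℝ) ^ 2 * (Fintype.card α - 1)) where
  pos := by
    have hcard : (1 : ℝ) < Fintype.card α := by exact_mod_cast Fintype.one_lt_card
    have := sub_pos.2 hcard
    positivity
  mul_sub_nonneg := fun (i, j, k, l) σ => by
    rw [crossDiff_mul_permSum_matchPerm_sub]
    exact sq_nonneg _
  sum_mul_sub σ := by
    simp only [crossDiff_mul_permSum_matchPerm_sub, Fintype.sum_prod_type,
      sum_crossDiff_sq hrow hcol, hnorm]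
  mul_expect_mul f := by
    rw [Fintype.expect_eq_sum_div_card, Fintype.expect_eq_sum_div_card, ← mul_div_assoc,
      sum_permSum_mul_eq_sum_matchPerm hrow fun σ => f (permSum c σ),
      sum_comm (t := (univ : Finset (α × α × α × α)))]
    simp only [Fintype.sum_prod_type]

theorem combinatorial_clt_bounded_general (hrow : ∀ i, ∑ j, c i j = 0)
    (hcol : ∀ j, ∑ i, c i j = 0)
    (hnorm : 1 / ((Fintype.card α : ℝ) - 1) * ∑ i, ∑ j, c i j ^ 2 = 1) {C : ℝ}
    (hbound : ∀ i j, |c i j| ≤ C) (z : ℝ) :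
    |(#{σ : Perm α | ∑ i, c i (σ i) ≤ z} : ℝ) / (Fintype.card α).factorial - Φ z| ≤ 24 * C := by
  have : Nontrivial α := by
    by_contra h
    rw [not_nontrivial_iff_subsingleton] at h
    have hzero (i j : α) : c i j = 0 := by rw [← hrow i, Fintype.sum_subsingleton _ j]
    simp [hzero] at hnorm
  have hsum : ∑ i, ∑ j, c i j ^ 2 = Fintype.card α - 1 := by
    rw [one_div_mul_eq_div] at hnorm
    exact eq_of_div_eq_one hnorm
  have hcoupling := isZeroBiasCoupling_permSum hrow hcol hsum
  have hclt := hcoupling.abs_card_le_div_sub_stdNormalCDF_le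
    (fun _ _ => abs_permSum_sub_le_of_eq_off_four hbound fun _ =>
      matchPerm_mul_swap_apply_of_notMem)
    (fun _ _ => abs_permSum_sub_le_of_eq_off_four hbound fun _ => matchPerm_apply_of_notMem) z
  rw [Fintype.card_perm] at hclt
  exact hclt.trans_eq (by ring)

end ZeroBias

end RandomPermutation

/-- **Combinatorial CLT for bounded deterministic arrays.**
For a real `n × n` array (`n ≥ 2`) with vanishing row and column sums, normalized so that
`(1/(n-1)) ∑ c² = 1`, and with `|c i j| ≤ C` for all `i, j`, the distribution of
`W = ∑ i, c i (π i)` under the uniform random permutation `π` satisfies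
`sup_z |P(W ≤ z) - Φ(z)| ≤ 451 C`. -/
theorem combinatorial_clt_bounded
    (n : ℕ) (hn : 2 ≤ n) (c : Fin n → Fin n → ℝ)
    (hrow : ∀ i, ∑ j, c i j = 0)
    (hcol : ∀ j, ∑ i, c i j = 0)
    (hnorm : (1 / ((n : ℝ) - 1)) * ∑ i, ∑ j, c i j ^ 2 = 1)
    (C : ℝ) (hC : 0 < C) (hbound : ∀ i j, |c i j| ≤ C) :
    ∀ z : ℝ,
      |((Finset.univ.filter
            (fun σ : Equiv.Perm (Fin n) => ∑ i, c i (σ i) ≤ z)).card : ℝ)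
          / (n.factorial : ℝ) - stdNormalCDF z|
        ≤ 451 * C := by
  have h := combinatorial_clt_bounded_general hrow hcol (by rwa [Fintype.card_fin]) hbound
  exact fun z => by simpa only [Fintype.card_fin] using (h z).trans (by linarith)
end
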